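/- arXiv:1903.00229 — 3 statements merged into one kernel-verified Lean document; each statement's English description precedes it below -/
import Mathlib

section
/- Suppose in addition that X is a Banach space, each G_n is convex, and X is θ-uniformly smooth for some θ > 1 (i.e., there is c > 0 with ρ_X(t) ≤ ct^θ for all t > 0). Then for every f ∈ X and n ∈ ℕ, K(f, 2^{-nα}; X, Y) ≤ C·(Σ_{k=n+1}^∞ 2^{-kαθ}‖P_{2^k}(f)‖_Y^θ)^{1/θ}, with C independent of f and n. -/
open scoped ENNReal

/-- The Peetre K-functional `K(f,t;X,Y) = inf{‖f−g‖_X + t‖g‖_Y : g ∈ Y}`. -/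
noncomputable def KFunctional {X : Type*} [SeminormedAddCommGroup X]
    (Y : Set X) (NY : X → ℝ) (f : X) (t : ℝ) : ℝ :=
  sInf {r : ℝ | ∃ g ∈ Y, r = ‖f - g‖ + t * NY g}

/-- The error of best approximation `E_n(f)_X = inf{‖f−g‖_X : g ∈ G_n}`. -/
noncomputable def bestApproxError {X : Type*} [SeminormedAddCommGroup X]
    (G : ℕ → Set X) (n : ℕ) (f : X) : ℝ :=
  sInf {r : ℝ | ∃ g ∈ G n, r = ‖f - g‖}

/-- The realization functional `R(f,n^{-α};X,G_n) = inf{‖f−g‖_X + n^{-α}‖g‖_Y : g ∈ G_n}`. -/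
noncomputable def realization {X : Type*} [SeminormedAddCommGroup X]
    (G : ℕ → Set X) (NY : X → ℝ) (α : ℝ) (n : ℕ) (f : X) : ℝ :=
  sInf {r : ℝ | ∃ g ∈ G n, r = ‖f - g‖ + (n : ℝ) ^ (-α) * NY g}

/-- The modulus of smoothness of the space `X`:
`ρ_X(t) = sup{(‖x+y‖ + ‖x−y‖)/2 − 1 : ‖x‖ = 1, ‖y‖ = t}`. -/
noncomputable def modulusSmoothness (X : Type*) [SeminormedAddCommGroup X] [NormedSpace ℝ X]
    (t : ℝ) : ℝ :=
  sSup {r : ℝ | ∃ x y : X, ‖x‖ = 1 ∧ ‖y‖ = t ∧ r = (‖x + y‖ + ‖x - y‖) / 2 - 1}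

/-- The tangent line inequality for `b ↦ b ^ θ` at `A`. -/
theorem rpow_tangent_le {θ A b : ℝ} (hθ : 1 < θ) (hA : 0 ≤ A) (hb : 0 ≤ b) :
    A ^ θ + θ * A ^ (θ - 1) * (b - A) ≤ b ^ θ := by
  rcases hA.eq_or_lt with rfl | hA
  · rw [Real.zero_rpow (by linarith), Real.zero_rpow (by linarith)]
    simpa using Real.rpow_nonneg hb θ
  · have h1 := one_add_mul_self_le_rpow_one_add (s := b / A - 1) (p := θ)
      (by have := div_nonneg hb hA.le; linarith) hθ.le
    have h2 : 1 + (b / A - 1) = b / A := by ring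
    rw [h2, Real.div_rpow hb hA.le, le_div_iff₀ (Real.rpow_pos_of_pos hA θ)] at h1
    have h3 : A ^ θ = A ^ (θ - 1) * A := by
      rw [Real.rpow_sub_one hA.ne', div_mul_cancel₀ _ hA.ne']
    calc _ = (1 + θ * (b / A - 1)) * A ^ θ := by rw [h3]; field_simp
      _ ≤ _ := h1

/-- A quadratic upper bound for `w ↦ w ^ θ` around `1`, for `1 < θ ≤ 2`. -/
theorem rpow_le_quadratic {θ w : ℝ} (hθ : 1 < θ) (hθ2 : θ ≤ 2) (hw : 0 ≤ w) :
    w ^ θ ≤ 1 + θ * (w - 1) + (w - 1) ^ 2 := by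
  have h1 := rpow_one_add_le_one_add_mul_self (s := w - 1) (p := θ - 1) (by linarith)
    (by linarith) (by linarith)
  have h2 : w ^ θ = w * w ^ (θ - 1) := by
    rcases hw.eq_or_lt with rfl | hw
    · rw [Real.zero_rpow (by linarith)]; simp
    · rw [Real.rpow_sub_one hw.ne', mul_div_cancel₀ _ hw.ne']
  rw [h2]
  rw [add_sub_cancel] at h1
  nlinarith [mul_le_mul_of_nonneg_left h1 hw, sq_nonneg (w - 1)]

section Smooth

variable {X : Type*} [NormedAddCommGroup X] [NormedSpace ℝ X]

/-- The power type smoothness inequality in homogeneous form. -/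
def PowerSmooth (X : Type*) [NormedAddCommGroup X] (c θ : ℝ) : Prop :=
  ∀ u y : X, u ≠ 0 → ‖u + y‖ + ‖u - y‖ ≤ 2 * ‖u‖ + c * ‖u‖ ^ (1 - θ) * ‖y‖ ^ θ

theorem powerSmooth_of_modulusSmoothness {θ c : ℝ} (hθ : 1 < θ)
    (hs : ∀ t : ℝ, 0 < t → modulusSmoothness X t ≤ c * t ^ θ) : PowerSmooth X (2 * c) θ := by
  intro u y hu
  have hu' : 0 < ‖u‖ := norm_pos_iff.2 hu
  rcases eq_or_ne y 0 with rfl | hy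
  · simp [Real.zero_rpow (by linarith : θ ≠ 0), two_mul]
  have hy' : 0 < ‖y‖ := norm_pos_iff.2 hy
  have h1 := hs (‖y‖ / ‖u‖) (by positivity)
  have h2 : (‖‖u‖⁻¹ • u + ‖u‖⁻¹ • y‖ + ‖‖u‖⁻¹ • u - ‖u‖⁻¹ • y‖) / 2 - 1
      ≤ modulusSmoothness X (‖y‖ / ‖u‖) := by
    apply le_csSup
    · refine ⟨‖y‖ / ‖u‖, ?_⟩
      rintro r ⟨a, b, ha, hb, rfl⟩
      have := norm_add_le a b
      have := norm_sub_le a b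
      linarith
    · refine ⟨_, _, ?_, ?_, rfl⟩
      · rw [norm_smul, norm_inv, norm_norm, inv_mul_cancel₀ hu'.ne']
      · rw [norm_smul, norm_inv, norm_norm, div_eq_inv_mul]
  rw [← smul_add, ← smul_sub, norm_smul, norm_smul, norm_inv, norm_norm] at h2
  rw [Real.div_rpow hy'.le hu'.le] at h1
  have h3 : ‖u‖ ^ (1 - θ) = ‖u‖ / ‖u‖ ^ θ := by
    rw [Real.rpow_sub hu', Real.rpow_one]
  rw [h3]
  have h4 := mul_le_mul_of_nonneg_left (h2.trans h1) (by positivity : 0 ≤ 2 * ‖u‖)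
  have h5 : 2 * ‖u‖ * ((‖u‖⁻¹ * ‖u + y‖ + ‖u‖⁻¹ * ‖u - y‖) / 2 - 1)
      = ‖u + y‖ + ‖u - y‖ - 2 * ‖u‖ := by field_simp
  have h6 : 2 * c * (‖u‖ / ‖u‖ ^ θ) * ‖y‖ ^ θ = 2 * ‖u‖ * (c * (‖y‖ ^ θ / ‖u‖ ^ θ)) := by ring
  rw [h6]
  linarith

variable {c θ : ℝ} {F : X →L[ℝ] ℝ}

theorem apply_le_norm_of_norm_eq_one (hF : ‖F‖ = 1) (y : X) : |F y| ≤ ‖y‖ := by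
  simpa [hF] using F.le_opNorm y

theorem PowerSmooth.norm_add_le (H : PowerSmooth X c θ) (hF : ‖F‖ = 1) {u : X} (hu : u ≠ 0)
    (hFu : F u = ‖u‖) (y : X) :
    ‖u + y‖ ≤ ‖u‖ + F y + c * ‖u‖ ^ (1 - θ) * ‖y‖ ^ θ := by
  have h1 := H u y hu
  have h2 := (le_abs_self _).trans (apply_le_norm_of_norm_eq_one hF (u - y))
  rw [map_sub, hFu] at h2
  linarith

/-- The Kolmogorov criterion for a best approximant from a convex set. -/
theorem PowerSmooth.apply_le_of_isBest (H : PowerSmooth X c θ) (hθ : 1 < θ) (hF : ‖F‖ = 1)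
    {S : Set X} (hS : Convex ℝ S) {f p : X} (hp : p ∈ S) (hbest : ∀ h ∈ S, ‖f - p‖ ≤ ‖f - h‖)
    (hu : f - p ≠ 0) (hFu : F (f - p) = ‖f - p‖) {h : X} (hh : h ∈ S) : F h ≤ F p := by
  set K := c * ‖f - p‖ ^ (1 - θ) * ‖p - h‖ ^ θ with hK
  have key : ∀ t ∈ Set.Ioo (0 : ℝ) 1, 0 ≤ F (p - h) + K * t ^ (θ - 1) := by
    rintro t ⟨ht0, ht1⟩
    have h1 := hbest (p + t • (h - p)) (hS.add_smul_sub_mem hp hh ⟨ht0.le, ht1.le⟩)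
    have h2 := H.norm_add_le hF hu hFu (t • (p - h))
    have h3 : f - p + t • (p - h) = f - (p + t • (h - p)) := by module
    rw [h3, map_smul, norm_smul, Real.norm_of_nonneg ht0.le,
      Real.mul_rpow ht0.le (norm_nonneg _), smul_eq_mul] at h2
    have h4 : t ^ θ = t * t ^ (θ - 1) := by
      rw [Real.rpow_sub_one ht0.ne', mul_div_cancel₀ _ ht0.ne']
    rw [h4] at h2
    have h5 : 0 ≤ t * (F (p - h) + K * t ^ (θ - 1)) := by
      rw [hK]; linarith
    exact nonneg_of_mul_nonneg_right h5 ht0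
  have hlim : Filter.Tendsto (fun t : ℝ => F (p - h) + K * t ^ (θ - 1))
      (nhdsWithin 0 (Set.Ioi 0)) (nhds (F (p - h) + K * (0 : ℝ) ^ (θ - 1))) := by
    apply Filter.Tendsto.mono_left _ nhdsWithin_le_nhds
    exact tendsto_const_nhds.add (tendsto_const_nhds.mul
      (Real.continuousAt_rpow_const 0 (θ - 1) (Or.inr (by linarith))).tendsto)
  have h0 := ge_of_tendsto hlim (by
    filter_upwards [Ioo_mem_nhdsGT (zero_lt_one' ℝ)] with t ht using key t ht)
  rw [Real.zero_rpow (by linarith), map_sub] at h0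
  linarith

theorem PowerSmooth.norm_add_rpow_le (H : PowerSmooth X c θ) (hc : 0 < c) (hθ : 1 < θ)
    (hθ2 : θ ≤ 2) (hF : ‖F‖ = 1) {u : X} (hu : u ≠ 0) (hFu : F u = ‖u‖) (y : X) :
    ‖u + y‖ ^ θ ≤ ‖u‖ ^ θ + θ * ‖u‖ ^ (θ - 1) * F y + (θ * c + 1 + 2 ^ θ + θ) * ‖y‖ ^ θ := by
  have hA : 0 < ‖u‖ := norm_pos_iff.2 hu
  have hAθ : 0 < ‖u‖ ^ θ := Real.rpow_pos_of_pos hA θ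
  have hyθ : 0 ≤ ‖y‖ ^ θ := Real.rpow_nonneg (norm_nonneg y) θ
  have h3 : ‖u‖ ^ θ = ‖u‖ ^ (θ - 1) * ‖u‖ := by
    rw [Real.rpow_sub_one hA.ne', div_mul_cancel₀ _ hA.ne']
  have hFy := abs_le.1 (apply_le_norm_of_norm_eq_one hF y)
  have h2pos : (0 : ℝ) < 2 ^ θ := by positivity
  rcases le_total ‖u‖ ‖y‖ with hle | hle
  · have h1 : ‖u + y‖ ^ θ ≤ 2 ^ θ * ‖y‖ ^ θ := by
      rw [← Real.mul_rpow (by norm_num) (norm_nonneg y)]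
      apply Real.rpow_le_rpow (norm_nonneg _) _ (by linarith)
      have := _root_.norm_add_le u y
      linarith
    have h2 : ‖u‖ ^ (θ - 1) * ‖y‖ ≤ ‖y‖ ^ θ := by
      have hy : 0 < ‖y‖ := hA.trans_le hle
      have : ‖y‖ ^ θ = ‖y‖ ^ (θ - 1) * ‖y‖ := by
        rw [Real.rpow_sub_one hy.ne', div_mul_cancel₀ _ hy.ne']
      rw [this]
      exact mul_le_mul_of_nonneg_right
        (Real.rpow_le_rpow hA.le hle (by linarith)) hy.le
    have h4 : -(‖u‖ ^ (θ - 1) * ‖y‖) ≤ ‖u‖ ^ (θ - 1) * F y := by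
      rw [← mul_neg]
      exact mul_le_mul_of_nonneg_left hFy.1 (by positivity)
    have h5 : 0 ≤ θ * c * ‖y‖ ^ θ := by positivity
    nlinarith
  · have hq := rpow_le_quadratic hθ hθ2 (w := ‖u + y‖ / ‖u‖) (by positivity)
    rw [Real.div_rpow (norm_nonneg _) hA.le, div_le_iff₀ hAθ] at hq
    have h1 := H.norm_add_le hF hu hFu y
    have hAθ' : ‖u‖ ^ (1 - θ) * ‖u‖ ^ (θ - 1) = 1 := by
      rw [← Real.rpow_add hA]; simp
    have h2 : θ * (‖u + y‖ / ‖u‖ - 1) * ‖u‖ ^ θ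
        ≤ θ * ‖u‖ ^ (θ - 1) * F y + θ * c * ‖y‖ ^ θ := by
      calc θ * (‖u + y‖ / ‖u‖ - 1) * ‖u‖ ^ θ = θ * ‖u‖ ^ (θ - 1) * (‖u + y‖ - ‖u‖) := by
            rw [h3]; field_simp
        _ ≤ θ * ‖u‖ ^ (θ - 1) * (F y + c * ‖u‖ ^ (1 - θ) * ‖y‖ ^ θ) :=
            mul_le_mul_of_nonneg_left (by linarith) (by positivity)
        _ = θ * ‖u‖ ^ (θ - 1) * F y
            + θ * c * ‖y‖ ^ θ * (‖u‖ ^ (1 - θ) * ‖u‖ ^ (θ - 1)) := by ring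
        _ = _ := by rw [hAθ', mul_one]
    have h5 : (‖u + y‖ / ‖u‖ - 1) ^ 2 * ‖u‖ ^ θ ≤ ‖y‖ ^ θ := by
      have ha : |‖u + y‖ / ‖u‖ - 1| ≤ ‖y‖ / ‖u‖ := by
        have : ‖u + y‖ / ‖u‖ - 1 = (‖u + y‖ - ‖u‖) / ‖u‖ := by field_simp
        rw [this, abs_div, abs_of_pos hA]
        gcongr
        simpa using abs_norm_sub_norm_le (u + y) u
      have hr1 : ‖y‖ / ‖u‖ ≤ 1 := (div_le_one hA).2 hle
      have hb : (‖u + y‖ / ‖u‖ - 1) ^ 2 ≤ (‖y‖ / ‖u‖) ^ θ := by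
        calc (‖u + y‖ / ‖u‖ - 1) ^ 2 ≤ (‖y‖ / ‖u‖) ^ 2 := by
              rw [← sq_abs]; gcongr
          _ = (‖y‖ / ‖u‖) ^ (2 : ℝ) := (Real.rpow_two _).symm
          _ ≤ (‖y‖ / ‖u‖) ^ θ :=
              Real.rpow_le_rpow_of_exponent_ge' (by positivity) hr1 (by linarith) hθ2
      rw [Real.div_rpow (norm_nonneg y) hA.le] at hb
      exact (le_div_iff₀ hAθ).1 hb
    nlinarith [mul_nonneg h2pos.le hyθ, mul_nonneg (by linarith : (0 : ℝ) ≤ θ) hyθ]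

/-- Smoothness of power type greater than `2` forces the space to be at most one-dimensional. -/
theorem PowerSmooth.exists_eq_smul (H : PowerSmooth X c θ) (hc : 0 < c) (hθ2 : 2 < θ)
    {u : X} (hu : u ≠ 0) (y : X) : ∃ a : ℝ, y = a • u := by
  by_contra! hy
  have hu' : 0 < ‖u‖ := norm_pos_iff.2 hu
  set L := Submodule.span ℝ {u}
  have hyL : y ∉ (L : Set X) := fun h => by
    obtain ⟨a, ha⟩ := Submodule.mem_span_singleton.1 h
    exact hy a ha.symm
  have hLc : IsClosed (L : Set X) := Submodule.closed_of_finiteDimensional L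
  have hm := (hLc.notMem_iff_infDist_pos ⟨0, L.zero_mem⟩).1 hyL
  set m := Metric.infDist y (L : Set X)
  have hlow : ∀ t : ℝ, m ≤ ‖y + t • u‖ := fun t => by
    have : y + t • u = y - (-t) • u := by module
    rw [this, ← dist_eq_norm]
    exact Metric.infDist_le_dist_of_mem (L.smul_mem _ (Submodule.mem_span_singleton_self u))
  set K := c * m ^ (1 - θ) * ‖u‖ ^ θ with hK
  have hK0 : 0 ≤ K := by positivity
  have key : ∀ k : ℕ, ∀ s : ℝ, 0 ≤ s → ∀ t : ℝ,
      ‖y + (t + s) • u‖ + ‖y + (t - s) • u‖ - 2 * ‖y + t • u‖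
        ≤ K * s ^ θ * ((2 : ℝ) ^ (2 - θ)) ^ k := by
    intro k
    induction k with
    | zero =>
      intro s hs t
      have hne : y + t • u ≠ 0 := norm_pos_iff.1 (hm.trans_le (hlow t))
      have h1 := H (y + t • u) (s • u) hne
      have h2 : ‖y + t • u‖ ^ (1 - θ) ≤ m ^ (1 - θ) :=
        Real.rpow_le_rpow_of_nonpos hm (hlow t) (by linarith)
      rw [norm_smul, Real.norm_of_nonneg hs, Real.mul_rpow hs hu'.le] at h1
      have h3 : c * ‖y + t • u‖ ^ (1 - θ) * (s ^ θ * ‖u‖ ^ θ)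
          ≤ c * m ^ (1 - θ) * (s ^ θ * ‖u‖ ^ θ) := by gcongr
      have e1 : y + t • u + s • u = y + (t + s) • u := by module
      have e2 : y + t • u - s • u = y + (t - s) • u := by module
      rw [e1, e2] at h1
      rw [hK, pow_zero]
      linarith
    | succ k ih =>
      intro s hs t
      have a1 := ih (s / 2) (by positivity) (t + s / 2)
      have a2 := ih (s / 2) (by positivity) t
      have a3 := ih (s / 2) (by positivity) (t - s / 2)
      have e1 : t + s / 2 + s / 2 = t + s := by ring
      have e2 : t - s / 2 - s / 2 = t - s := by ring
      rw [e1, add_sub_cancel_right] at a1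
      rw [e2, sub_add_cancel] at a3
      have e3 : K * s ^ θ * ((2 : ℝ) ^ (2 - θ)) ^ (k + 1)
          = 4 * (K * (s / 2) ^ θ * ((2 : ℝ) ^ (2 - θ)) ^ k) := by
        rw [Real.div_rpow hs (by norm_num), pow_succ, Real.rpow_sub (by norm_num) 2 θ,
          Real.rpow_two]
        ring
      rw [e3]
      linarith
  have hlim : ∀ s : ℝ, 0 ≤ s → ‖y + (0 + s) • u‖ + ‖y + (0 - s) • u‖
      - 2 * ‖y + (0 : ℝ) • u‖ ≤ 0 := by
    intro s hs
    have h1 := (tendsto_pow_atTop_nhds_zero_of_lt_one (r := (2 : ℝ) ^ (2 - θ)) (by positivity)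
      (Real.rpow_lt_one_of_one_lt_of_neg (by norm_num) (by linarith))).const_mul (K * s ^ θ)
    rw [mul_zero] at h1
    exact ge_of_tendsto' h1 fun k => key k s hs 0
  have h1 := hlim ((‖y‖ + 1) / ‖u‖) (by positivity)
  set s := (‖y‖ + 1) / ‖u‖ with hs
  have h2 : ‖(2 * s) • u‖ ≤ ‖y + (0 + s) • u‖ + ‖y + (0 - s) • u‖ := by
    have : (2 * s) • u = (y + (0 + s) • u) - (y + (0 - s) • u) := by module
    rw [this]
    exact norm_sub_le _ _
  have h3 : ‖(2 * s) • u‖ = 2 * (‖y‖ + 1) := by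
    rw [norm_smul, Real.norm_of_nonneg (by positivity), hs]
    field_simp
  rw [zero_smul, add_zero] at h1
  linarith

/-- Comparison of the distances from `f` to two dilated points of a symmetric convex set, in terms
of a best approximant `p` of `f`. -/
theorem PowerSmooth.norm_sub_rpow_le (H : PowerSmooth X c θ) (hc : 0 < c) (hθ : 1 < θ)
    {S : Set X} (hS : Convex ℝ S) (hneg : ∀ g ∈ S, -g ∈ S) {f p : X} (hp : p ∈ S)
    (hbest : ∀ h ∈ S, ‖f - p‖ ≤ ‖f - h‖) :
    ∃ M : ℝ, 0 ≤ M ∧ ∀ l : ℝ, 1 ≤ l → ∀ g h : X, l • g ∈ S → l • h ∈ S →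
      ‖f - g‖ ^ θ ≤ ‖f - h‖ ^ θ + (θ * c + 1 + 2 ^ θ + θ) * ‖p - g‖ ^ θ + M / l := by
  have hC : 1 ≤ θ * c + 1 + 2 ^ θ + θ := by
    have : 0 ≤ θ * c := by positivity
    have : (0 : ℝ) < 2 ^ θ := by positivity
    linarith
  have hC0 : 0 ≤ θ * c + 1 + 2 ^ θ + θ := by linarith
  by_cases hu : f - p = 0
  · refine ⟨0, le_rfl, fun l _ g h _ _ => ?_⟩
    rw [sub_eq_zero.1 hu, zero_div, add_zero]
    have h1 : 0 ≤ ‖p - g‖ ^ θ := by positivity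
    have h2 : 0 ≤ ‖p - h‖ ^ θ := by positivity
    nlinarith
  obtain ⟨F, hF, hFu⟩ := exists_dual_vector ℝ (f - p) (norm_ne_zero_iff.2 hu)
  replace hFu : F (f - p) = ‖f - p‖ := hFu
  have hFle : ∀ l : ℝ, 1 ≤ l → ∀ h : X, l • h ∈ S → |F h| ≤ F p / l := by
    intro l hl h hh
    have hl0 : 0 < l := by linarith
    have h1 := H.apply_le_of_isBest hθ hF hS hp hbest hu hFu hh
    have h2 := H.apply_le_of_isBest hθ hF hS hp hbest hu hFu (hneg _ hh)
    rw [map_neg] at h2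
    rw [map_smul, smul_eq_mul] at h1 h2
    rw [le_div_iff₀ hl0]
    rcases abs_cases (F h) with ⟨e, _⟩ | ⟨e, _⟩ <;> rw [e] <;> linarith
  have hFp : 0 ≤ F p := by
    have := (abs_nonneg _).trans (hFle 1 le_rfl p (by simpa using hp))
    simpa using this
  rcases le_or_gt θ 2 with hθ2 | hθ2
  · refine ⟨θ * ‖f - p‖ ^ (θ - 1) * (2 * F p), by positivity, fun l hl g h hg hh => ?_⟩
    have h1 := H.norm_add_rpow_le hc hθ hθ2 hF hu hFu (p - g)
    have h2 := rpow_tangent_le hθ (norm_nonneg (f - p)) (norm_nonneg (f - h))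
    have h3 : F (p - h) ≤ ‖f - h‖ - ‖f - p‖ := by
      have := (le_abs_self _).trans (apply_le_norm_of_norm_eq_one hF (f - h))
      have e : F (f - h) = F (f - p) + F (p - h) := by rw [← map_add, sub_add_sub_cancel]
      linarith
    have h4 : θ * ‖f - p‖ ^ (θ - 1) * F (p - h) ≤
        θ * ‖f - p‖ ^ (θ - 1) * (‖f - h‖ - ‖f - p‖) :=
      mul_le_mul_of_nonneg_left h3 (by positivity)
    have h5 : F (p - g) ≤ F (p - h) + 2 * F p / l := by
      have := abs_le.1 (hFle l hl g hg)
      have := abs_le.1 (hFle l hl h hh)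
      rw [map_sub, map_sub, mul_div_assoc]
      linarith
    have h6 : θ * ‖f - p‖ ^ (θ - 1) * F (p - g) ≤
        θ * ‖f - p‖ ^ (θ - 1) * (F (p - h) + 2 * F p / l) :=
      mul_le_mul_of_nonneg_left h5 (by positivity)
    rw [sub_add_sub_cancel] at h1
    rw [mul_div_assoc]
    linarith
  · have hnorm : ∀ h : X, |F h| = ‖h‖ := fun h => by
      obtain ⟨a, rfl⟩ := H.exists_eq_smul hc hθ2 hu h
      rw [map_smul, hFu, smul_eq_mul, abs_mul, abs_norm, norm_smul, Real.norm_eq_abs]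
    refine ⟨θ * (‖f‖ + F p) ^ (θ - 1) * (2 * F p), by positivity, fun l hl g h hg hh => ?_⟩
    have hg' := hFle l hl g hg
    have hh' := hFle l hl h hh
    rw [hnorm] at hg' hh'
    have h1 := rpow_tangent_le hθ (norm_nonneg (f - g)) (norm_nonneg (f - h))
    have h2 : ‖f - g‖ ^ (θ - 1) ≤ (‖f‖ + F p) ^ (θ - 1) := by
      apply Real.rpow_le_rpow (norm_nonneg _) _ (by linarith)
      have := norm_sub_le f g
      have := div_le_self hFp hl
      linarith
    have h3 : ‖f - g‖ - ‖f - h‖ ≤ 2 * F p / l := by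
      have := norm_sub_norm_le (f - g) (f - h)
      rw [sub_sub_sub_cancel_left] at this
      have := norm_sub_le h g
      rw [mul_div_assoc]
      linarith
    have h4 : θ * ‖f - g‖ ^ (θ - 1) * (‖f - g‖ - ‖f - h‖) ≤
        θ * (‖f‖ + F p) ^ (θ - 1) * (2 * F p / l) := by
      calc _ ≤ θ * ‖f - g‖ ^ (θ - 1) * (2 * F p / l) :=
            mul_le_mul_of_nonneg_left h3 (by positivity)
        _ ≤ _ := by gcongr
    have h5 : 0 ≤ (θ * c + 1 + 2 ^ θ + θ) * ‖p - g‖ ^ θ := by positivity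
    rw [mul_div_assoc]
    linarith

end Smooth

/-- Theorem (B). If `X` is a Banach space which is `θ`-uniformly smooth,
each `G_n` is convex, and the Jackson, Bernstein and realization assumptions hold, then
`K(f, 2^{-nα}; X, Y) ≲ (∑_{k=n+1}^∞ 2^{-kαθ} ‖P_{2^k}(f)‖_Y^θ)^{1/θ}`. -/
theorem stmt7 {X : Type*} [NormedAddCommGroup X] [NormedSpace ℝ X] [CompleteSpace X]
    (Y : Submodule ℝ X) (NY : X → ℝ)
    (hNY_nonneg : ∀ g : X, 0 ≤ NY g)
    (hNY_add : ∀ g h : X, g ∈ Y → h ∈ Y → NY (g + h) ≤ NY g + NY h)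
    (hNY_smul : ∀ (c : ℝ) (g : X), g ∈ Y → NY (c • g) = |c| * NY g)
    (G : ℕ → Set X)
    (hG_zero : (0 : X) ∈ G 1)
    (hG_mono : ∀ n : ℕ, G n ⊆ G (n + 1))
    (hG_neg : ∀ (n : ℕ) (g : X), g ∈ G n → -g ∈ G n)
    (hG_sub : ∀ n : ℕ, G n ⊆ (Y : Set X))
    (hG_dense : Dense (⋃ n : ℕ, G (n + 1)))
    (α : ℝ) (hα : 0 < α)
    (c₁ c₂ : ℝ) (hc₁ : 0 < c₁) (hc₂ : 0 < c₂)
    (jackson : ∀ f ∈ Y, ∀ n : ℕ, 1 ≤ n →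
      bestApproxError G n f ≤ c₁ * (n : ℝ) ^ (-α) * NY f)
    (bernstein : ∀ n : ℕ, 1 ≤ n → ∀ g₁ ∈ G n, ∀ g₂ ∈ G n,
      NY (g₁ - g₂) ≤ c₂ * (n : ℝ) ^ α * ‖g₁ - g₂‖)
    (C₀ : ℝ) (hC₀ : 0 < C₀)
    (hreal : ∀ (f : X) (n : ℕ), 1 ≤ n →
      realization G NY α n f ≤ C₀ * KFunctional (Y : Set X) NY f ((n : ℝ) ^ (-α)))
    (P : ℕ → X → X)
    (hP : ∀ (f : X) (n : ℕ), 1 ≤ n → P n f ∈ G n ∧ ‖f - P n f‖ = bestApproxError G n f)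
    (hG_conv : ∀ n : ℕ, Convex ℝ (G n))
    (θ : ℝ) (hθ : 1 < θ)
    (cX : ℝ) (hcX : 0 < cX)
    (hsmooth : ∀ t : ℝ, 0 < t → modulusSmoothness X t ≤ cX * t ^ θ) :
    ∃ C : ℝ, 0 < C ∧ ∀ (f : X) (n : ℕ), 1 ≤ n →
      ENNReal.ofReal (KFunctional (Y : Set X) NY f ((2 : ℝ) ^ (-(n : ℝ) * α)))
        ≤ ENNReal.ofReal C *
          (∑' k : ℕ,
            ENNReal.ofReal
              (((2 : ℝ) ^ (-((n + 1 + k : ℕ) : ℝ) * α) * NY (P (2 ^ (n + 1 + k)) f)) ^ θ)) ^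
            (1 / θ) := by
  have hGmono : Monotone G := monotone_nat_of_le_succ hG_mono
  have hG0 : ∀ n : ℕ, 1 ≤ n → (0 : X) ∈ G n := fun n hn => hGmono hn hG_zero
  have hbest : ∀ (f : X) (n : ℕ), 1 ≤ n → ∀ h ∈ G n, ‖f - P n f‖ ≤ ‖f - h‖ := by
    intro f n hn h hh
    rw [(hP f n hn).2]
    exact csInf_le ⟨0, by rintro r ⟨g, _, rfl⟩; positivity⟩ ⟨h, hh, rfl⟩
  have hone : ∀ k : ℕ, 1 ≤ 2 ^ k := fun k => Nat.one_le_two_pow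
  have hpow : ∀ k : ℕ, ((2 ^ k : ℕ) : ℝ) ^ (-α) = (2 : ℝ) ^ (-(k : ℝ) * α) := by
    intro k
    rw [Nat.cast_pow, Nat.cast_two, ← Real.rpow_natCast, ← Real.rpow_mul (by norm_num)]
    congr 1
    ring
  have hshift : ∀ k : ℕ,
      (2 : ℝ) ^ (-(k : ℝ) * α) = 2 ^ α * 2 ^ (-((k + 1 : ℕ) : ℝ) * α) := by
    intro k
    rw [← Real.rpow_add (by norm_num)]
    congr 1
    push_cast
    ring
  have hjack : ∀ y ∈ Y, ∀ k : ℕ,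
      ‖y - P (2 ^ k) y‖ ≤ c₁ * (2 : ℝ) ^ (-(k : ℝ) * α) * NY y := by
    intro y hy k
    rw [(hP y _ (hone k)).2, ← hpow]
    exact jackson y hy _ (hone k)
  have hscale : ∀ l : ℝ, 1 ≤ l → ∀ x : X, l • l⁻¹ • x = x := fun l hl x =>
    smul_inv_smul₀ (by linarith) x
  have hdist : ∀ l : ℝ, 1 ≤ l → ∀ x z : X, ‖x - l⁻¹ • z‖ = l⁻¹ * ‖l • x - z‖ := by
    intro l hl x z
    have e : x - l⁻¹ • z = l⁻¹ • (l • x - z) := by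
      rw [smul_sub, inv_smul_smul₀ (by linarith)]
    rw [e, norm_smul, Real.norm_of_nonneg (by positivity)]
  have hdbest : ∀ (f : X) (l : ℝ), 1 ≤ l → ∀ (k : ℕ) (g : X), g ∈ G (2 ^ k) →
      ‖f - l⁻¹ • P (2 ^ k) (l • f)‖ ≤ ‖f - l⁻¹ • g‖ := by
    intro f l hl k g hg
    rw [hdist l hl, hdist l hl]
    exact mul_le_mul_of_nonneg_left (hbest _ _ (hone k) _ hg) (by positivity)
  have hdjack : ∀ y ∈ Y, ∀ l : ℝ, 1 ≤ l → ∀ k : ℕ,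
      ‖y - l⁻¹ • P (2 ^ k) (l • y)‖ ≤ c₁ * (2 : ℝ) ^ (-(k : ℝ) * α) * NY y := by
    intro y hy l hl k
    have hl0 : 0 < l := by linarith
    have h1 := hjack (l • y) (Y.smul_mem l hy) k
    rw [hNY_smul l y hy, abs_of_pos hl0] at h1
    rw [hdist l hl, inv_mul_le_iff₀ hl0]
    linarith
  have H : PowerSmooth X (2 * cX) θ := powerSmooth_of_modulusSmoothness hθ hsmooth
  set C₁ := θ * (2 * cX) + 1 + 2 ^ θ + θ with hC₁
  have hC₁0 : 0 < C₁ := by positivity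
  set b : X → ℕ → ℝ := fun f k => (2 : ℝ) ^ (-(k : ℝ) * α) * NY (P (2 ^ k) f) with hb
  have hb0 : ∀ f k, 0 ≤ b f k := fun f k => mul_nonneg (by positivity) (hNY_nonneg _)
  set D := C₁ * (c₁ * 2 ^ α) ^ θ with hD
  have hD0 : 0 < D := by positivity
  have hstep : ∀ (f : X) (k : ℕ), ∃ M : ℝ, 0 ≤ M ∧ ∀ l : ℝ, 1 ≤ l →
      ‖f - l⁻¹ • P (2 ^ k) (l • f)‖ ^ θ ≤
        ‖f - l⁻¹ • P (2 ^ (k + 1)) (l • f)‖ ^ θ + D * b f (k + 1) ^ θ + M / l := by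
    intro f k
    obtain ⟨hp, -⟩ := hP f _ (hone (k + 1))
    set p := P (2 ^ (k + 1)) f with hpdef
    obtain ⟨M, hM, hM'⟩ := H.norm_sub_rpow_le (by positivity) hθ (hG_conv (2 ^ (k + 1)))
      (hG_neg _) hp (hbest f _ (hone (k + 1)))
    refine ⟨M, hM, fun l hl => ?_⟩
    have hgk := (hP (l • p) _ (hone k)).1
    have h1 := hM' l hl (l⁻¹ • P (2 ^ k) (l • p)) (l⁻¹ • P (2 ^ (k + 1)) (l • f))
      (by rw [hscale l hl]; exact hGmono (Nat.pow_le_pow_right (by norm_num) k.le_succ) hgk)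
      (by rw [hscale l hl]; exact (hP _ _ (hone _)).1)
    have h2 := Real.rpow_le_rpow (norm_nonneg _) (hdbest f l hl k _ hgk) (by linarith : 0 ≤ θ)
    have h3 : ‖p - l⁻¹ • P (2 ^ k) (l • p)‖ ≤ c₁ * 2 ^ α * b f (k + 1) := by
      refine (hdjack p (hG_sub _ hp) l hl k).trans_eq ?_
      rw [hshift, hb]
      ring
    have h4 := Real.rpow_le_rpow (norm_nonneg _) h3 (by linarith : 0 ≤ θ)
    rw [Real.mul_rpow (by positivity) (hb0 _ _)] at h4
    have h5 := mul_le_mul_of_nonneg_left h4 hC₁0.le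
    rw [← mul_assoc] at h5
    linarith
  have hsum : ∀ (f : X) (m N : ℕ), ∃ M : ℝ, 0 ≤ M ∧ ∀ l : ℝ, 1 ≤ l →
      ‖f - l⁻¹ • P (2 ^ m) (l • f)‖ ^ θ ≤
        ‖f - l⁻¹ • P (2 ^ (m + N)) (l • f)‖ ^ θ
          + D * ∑ j ∈ Finset.range N, b f (m + (j + 1)) ^ θ + M / l := by
    intro f m N
    induction N with
    | zero => exact ⟨0, le_rfl, fun l _ => by simp⟩
    | succ N ih =>
      obtain ⟨M, hM, hM'⟩ := ih
      obtain ⟨M₂, hM₂, hM₂'⟩ := hstep f (m + N)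
      refine ⟨M + M₂, by positivity, fun l hl => ?_⟩
      have h1 := hM' l hl
      have h2 := hM₂' l hl
      rw [Finset.sum_range_succ, add_div, mul_add]
      rw [add_assoc m N 1] at h2
      linarith
  have htail : ∀ (f : X) (m : ℕ) (ε : ℝ), 0 < ε → ∃ N : ℕ, ∀ l : ℝ, 1 ≤ l →
      ‖f - l⁻¹ • P (2 ^ (m + N)) (l • f)‖ < ε := by
    intro f m ε hε
    obtain ⟨g, hg, hfg⟩ := hG_dense.exists_dist_lt f (half_pos hε)
    obtain ⟨i, hi⟩ := Set.mem_iUnion.1 hg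
    have hgY : g ∈ Y := hG_sub _ hi
    rw [dist_eq_norm] at hfg
    have hlim : Filter.Tendsto (fun N : ℕ => c₁ * (2 : ℝ) ^ (-((m + N : ℕ) : ℝ) * α) * NY g)
        Filter.atTop (nhds 0) := by
      have h1 := (tendsto_pow_atTop_nhds_zero_of_lt_one (r := (2 : ℝ) ^ (-α)) (by positivity)
        (Real.rpow_lt_one_of_one_lt_of_neg (by norm_num) (by linarith))).const_mul
          (c₁ * (2 : ℝ) ^ (-(m : ℝ) * α) * NY g)
      rw [mul_zero] at h1
      refine h1.congr fun N => ?_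
      have : (2 : ℝ) ^ (-((m + N : ℕ) : ℝ) * α) = 2 ^ (-(m : ℝ) * α) * ((2 : ℝ) ^ (-α)) ^ N := by
        rw [← Real.rpow_mul_natCast (by norm_num), ← Real.rpow_add (by norm_num)]
        congr 1
        push_cast
        ring
      rw [this]
      ring
    obtain ⟨N, hN⟩ := (hlim.eventually (gt_mem_nhds (half_pos hε))).exists
    refine ⟨N, fun l hl => ?_⟩
    have h1 := hdbest f l hl (m + N) _ (hP (l • g) _ (hone (m + N))).1
    have h2 := hdjack g hgY l hl (m + N)
    have h3 := norm_sub_le_norm_sub_add_norm_sub f g (l⁻¹ • P (2 ^ (m + N)) (l • g))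
    linarith
  have hmain : ∀ (f : X) (m : ℕ) (T : ℝ),
      (∀ N, ∑ j ∈ Finset.range N, b f (m + (j + 1)) ^ θ ≤ T) →
      ‖f - P (2 ^ m) f‖ ^ θ ≤ D * T := by
    intro f m T hT
    refine le_of_forall_pos_le_add fun ε hε => ?_
    obtain ⟨N, hN⟩ := htail f m ((ε / 2) ^ (1 / θ)) (by positivity)
    obtain ⟨M, hM, hM'⟩ := hsum f m N
    set l := max 1 (2 * M / ε) with hl
    have hl1 : 1 ≤ l := le_max_left _ _
    have hl0 : 0 < l := by linarith
    have h1 := hM' l hl1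
    have h2 := Real.rpow_le_rpow (norm_nonneg _) (hN l hl1).le (by linarith : 0 ≤ θ)
    rw [← Real.rpow_mul (by positivity), one_div_mul_cancel (by linarith), Real.rpow_one] at h2
    have h3 : M / l ≤ ε / 2 := by
      rw [div_le_iff₀ hl0]
      have := (div_le_iff₀ hε).1 (le_max_right 1 (2 * M / ε))
      linarith
    have h4 := mul_le_mul_of_nonneg_left (hT N) hD0.le
    have h5 : l⁻¹ • P (2 ^ m) (l • f) ∈ G (2 ^ m) := by
      have := (hG_conv (2 ^ m)).smul_mem_of_zero_mem (hG0 _ (hone m))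
        (hP (l • f) _ (hone m)).1 (t := l⁻¹) ⟨by positivity, inv_le_one_of_one_le₀ hl1⟩
      exact this
    have h6 := Real.rpow_le_rpow (norm_nonneg _) (hbest f _ (hone m) _ h5)
      (by linarith : 0 ≤ θ)
    linarith
  refine ⟨D ^ (1 / θ) + 2 ^ α, by positivity, fun f n _ => ?_⟩
  set B : ℕ → ℝ := fun k => b f (n + 1 + k) ^ θ with hB
  have hB0 : ∀ k, 0 ≤ B k := fun k => Real.rpow_nonneg (hb0 _ _) _
  have hθ' : 0 < 1 / θ := by positivity
  change _ ≤ _ * (∑' k, ENNReal.ofReal (B k)) ^ (1 / θ)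
  by_cases hBs : Summable B
  swap
  · have htop : ∑' k, ENNReal.ofReal (B k) = ⊤ := by
      by_contra hne
      refine hBs ((ENNReal.summable_toReal hne).congr fun k => ?_)
      exact ENNReal.toReal_ofReal (hB0 k)
    rw [htop, ENNReal.top_rpow_of_pos hθ', ENNReal.mul_top
      (ENNReal.ofReal_pos.2 (by positivity)).ne']
    exact le_top
  set T := ∑' k, B k with hTdef
  have hT0 : 0 ≤ T := tsum_nonneg hB0
  rw [← ENNReal.ofReal_tsum_of_nonneg hB0 hBs, ENNReal.ofReal_rpow_of_nonneg hT0 hθ'.le,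
    ← ENNReal.ofReal_mul (by positivity)]
  apply ENNReal.ofReal_le_ofReal
  have hroot : ∀ x : ℝ, 0 ≤ x → (x ^ θ) ^ (1 / θ) = x := fun x hx => by
    rw [← Real.rpow_mul hx, mul_one_div_cancel (by linarith), Real.rpow_one]
  have hE := hmain f (n + 1) T fun N => by
    calc ∑ j ∈ Finset.range N, B (j + 1) ≤ ∑ j ∈ Finset.range (N + 1), B j := by
          rw [Finset.sum_range_succ']
          linarith [hB0 0]
      _ ≤ T := hBs.sum_le_tsum _ fun k _ => hB0 k
  have hE' := Real.rpow_le_rpow (by positivity) hE hθ'.le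
  rw [hroot _ (norm_nonneg _), Real.mul_rpow hD0.le hT0] at hE'
  have hbT := Real.rpow_le_rpow (hB0 0) (hBs.le_tsum 0 fun k _ => hB0 k) hθ'.le
  rw [hB] at hbT
  simp only [add_zero] at hbT
  rw [hroot _ (hb0 _ _)] at hbT
  have hPn := (hP f _ (hone (n + 1))).1
  have hK : KFunctional (Y : Set X) NY f ((2 : ℝ) ^ (-(n : ℝ) * α)) ≤
      ‖f - P (2 ^ (n + 1)) f‖ + (2 : ℝ) ^ (-(n : ℝ) * α) * NY (P (2 ^ (n + 1)) f) := by
    refine csInf_le ⟨0, ?_⟩ ⟨_, hG_sub _ hPn, rfl⟩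
    rintro r ⟨g, _, rfl⟩
    have := hNY_nonneg g
    positivity
  have h2 : (2 : ℝ) ^ (-(n : ℝ) * α) * NY (P (2 ^ (n + 1)) f) = 2 ^ α * b f (n + 1) := by
    rw [hshift, hb]
    ring
  have h3 := mul_le_mul_of_nonneg_left hbT (by positivity : (0 : ℝ) ≤ 2 ^ α)
  rw [h2] at hK
  rw [add_mul]
  exact hK.trans (add_le_add hE' h3)
end

section
/- Let X = L_p(μ) for a measure space (S, μ) with 1 < p < ∞, suppose each G_n is convex, and set τ = max(2,p) and θ = min(2,p). Then for every f ∈ L_p and n ∈ ℕ, (Σ_{k=n+1}^∞ 2^{-kατ}‖P_{2^k}(f)‖_Y^τ)^{1/τ} ≤ C·K(f, 2^{-nα}; L_p, Y) and K(f, 2^{-nα}; L_p, Y) ≤ C·(Σ_{k=n+1}^∞ 2^{-kαθ}‖P_{2^k}(f)‖_Y^θ)^{1/θ}, with C independent of f and n. -/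
open scoped ENNReal
open MeasureTheory

/-- Midpoint convexity of `x ↦ x ^ s` on the nonnegative reals for `1 ≤ s`. -/
lemma rpow_half_add_le {s a b : ℝ} (hs : 1 ≤ s) (ha : 0 ≤ a) (hb : 0 ≤ b) :
    ((a + b) / 2) ^ s ≤ (a ^ s + b ^ s) / 2 := by
  have h := (convexOn_rpow hs).2 (Set.mem_Ici.2 ha) (Set.mem_Ici.2 hb)
    (by norm_num : (0 : ℝ) ≤ 1 / 2) (by norm_num : (0 : ℝ) ≤ 1 / 2) (by norm_num)
  simp only [smul_eq_mul] at h
  calc ((a + b) / 2) ^ s = (1 / 2 * a + 1 / 2 * b) ^ s := by ring_nf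
    _ ≤ _ := h
    _ = _ := by ring

/-- Midpoint concavity of `x ↦ x ^ s` on the nonnegative reals for `0 ≤ s ≤ 1`. -/
lemma half_add_rpow_le {s a b : ℝ} (hs0 : 0 ≤ s) (hs : s ≤ 1) (ha : 0 ≤ a) (hb : 0 ≤ b) :
    (a ^ s + b ^ s) / 2 ≤ ((a + b) / 2) ^ s := by
  have h := (Real.concaveOn_rpow hs0 hs).2 (Set.mem_Ici.2 ha) (Set.mem_Ici.2 hb)
    (by norm_num : (0 : ℝ) ≤ 1 / 2) (by norm_num : (0 : ℝ) ≤ 1 / 2) (by norm_num)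
  simp only [smul_eq_mul] at h
  calc (a ^ s + b ^ s) / 2 = 1 / 2 * a ^ s + 1 / 2 * b ^ s := by ring
    _ ≤ _ := h
    _ = _ := by ring_nf

lemma sq_rpow_half {p a : ℝ} : (a ^ 2) ^ (p / 2) = |a| ^ p := by
  rw [← sq_abs, ← Real.rpow_natCast, ← Real.rpow_mul (abs_nonneg a)]
  congr 1
  push_cast
  ring

lemma abs_add_rpow_add_abs_sub_rpow (p a b : ℝ) :
    |a + b| ^ p + |a - b| ^ p = (|a| + |b|) ^ p + |(|a| - |b|)| ^ p := by
  rcases abs_cases a with ⟨ha, _⟩ | ⟨ha, _⟩ <;> rcases abs_cases b with ⟨hb, _⟩ | ⟨hb, _⟩ <;>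
    rw [ha, hb]
  · rw [abs_of_nonneg (by linarith : 0 ≤ a + b)]
  · rw [abs_of_nonneg (by linarith : 0 ≤ a - b), sub_neg_eq_add, ← sub_eq_add_neg, add_comm]
  · rw [abs_of_nonpos (by linarith : a - b ≤ 0), ← abs_neg (a + b)]
    ring_nf
  · rw [abs_of_nonpos (by linarith : a + b ≤ 0), ← abs_neg (a - b)]
    ring_nf

lemma two_mul_add_rpow_le {p : ℝ} (hp : 2 ≤ p) (a b : ℝ) :
    2 * (|a| ^ p + |b| ^ p) ≤ |a + b| ^ p + |a - b| ^ p := by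
  have h1 := rpow_half_add_le (s := p / 2) (by linarith) (sq_nonneg (a + b)) (sq_nonneg (a - b))
  have h2 := Real.add_rpow_le_rpow_add (sq_nonneg a) (sq_nonneg b) (by linarith : 1 ≤ p / 2)
  rw [show ((a + b) ^ 2 + (a - b) ^ 2) / 2 = a ^ 2 + b ^ 2 by ring] at h1
  simp only [sq_rpow_half] at h1 h2
  linarith

lemma add_rpow_le_two_mul {p : ℝ} (hp1 : 0 ≤ p) (hp : p ≤ 2) (a b : ℝ) :
    |a + b| ^ p + |a - b| ^ p ≤ 2 * (|a| ^ p + |b| ^ p) := by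
  have h1 := half_add_rpow_le (s := p / 2) (by linarith) (by linarith)
    (sq_nonneg (a + b)) (sq_nonneg (a - b))
  have h2 := Real.rpow_add_le_add_rpow (sq_nonneg a) (sq_nonneg b) (by linarith : 0 ≤ p / 2)
    (by linarith : p / 2 ≤ 1)
  rw [show ((a + b) ^ 2 + (a - b) ^ 2) / 2 = a ^ 2 + b ^ 2 by ring] at h1
  simp only [sq_rpow_half] at h1 h2
  linarith

lemma one_sub_rpow_ge {p t : ℝ} (hp1 : 1 < p) (hp : p ≤ 2) (ht0 : 0 ≤ t) (ht : t ≤ 1) :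
    1 - p * t + (p - 1) ^ 2 * t ^ 2 ≤ (1 - t) ^ p := by
  rcases ht.eq_or_lt with rfl | ht
  · rw [sub_self, Real.zero_rpow (by linarith)]
    nlinarith
  have h1 : (1 - t) ^ (2 - p) ≤ 1 - (2 - p) * t := by
    have := rpow_one_add_le_one_add_mul_self (s := -t) (p := 2 - p)
      (by linarith) (by linarith) (by linarith)
    calc (1 - t) ^ (2 - p) = (1 + -t) ^ (2 - p) := by ring_nf
      _ ≤ _ := this
      _ = _ := by ring
  have h2 : (1 - t) ^ p * (1 - t) ^ (2 - p) = (1 - t) ^ 2 := by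
    rw [← Real.rpow_add (by linarith)]
    norm_num
  have h3 : 0 < (1 - t) ^ p := Real.rpow_pos_of_pos (by linarith) _
  have h4 : 0 < 1 - (2 - p) * t := by nlinarith
  have h5 : (1 - t) ^ 2 ≤ (1 - t) ^ p * (1 - (2 - p) * t) := by
    rw [← h2]
    gcongr
  refine le_of_mul_le_mul_right (le_trans ?_ h5) h4
  have h6 : 0 ≤ (2 - p) * (p - 1) ^ 2 * t ^ 3 := by
    have : 0 ≤ 2 - p := by linarith
    positivity
  nlinarith

lemma two_point_convex_of_le {p a b : ℝ} (hp1 : 1 < p) (hp : p ≤ 2) (hb : 0 ≤ b) (hab : b ≤ a) :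
    2 * (a ^ 2 + (p - 1) ^ 2 / p * b ^ 2) ^ (p / 2) ≤ (a + b) ^ p + (a - b) ^ p := by
  rcases (hb.trans hab).eq_or_lt with rfl | ha
  · obtain rfl : b = 0 := le_antisymm hab hb
    simp [Real.zero_rpow (by linarith : p / 2 ≠ 0), Real.zero_rpow (by linarith : p ≠ 0)]
  obtain ⟨t, rfl⟩ : ∃ t, b = a * t := ⟨b / a, by field_simp⟩
  have ht0 : 0 ≤ t := nonneg_of_mul_nonneg_right hb ha
  have ht1 : t ≤ 1 := by nlinarith
  have hc : 0 ≤ (p - 1) ^ 2 / p * t ^ 2 := by positivity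
  have h1 := one_sub_rpow_ge hp1 hp ht0 ht1
  have h2 := one_add_mul_self_le_rpow_one_add (s := t) (by linarith) hp1.le
  have h3 := rpow_one_add_le_one_add_mul_self (s := (p - 1) ^ 2 / p * t ^ 2) (p := p / 2)
      (by linarith) (by linarith) (by linarith)
  rw [show p / 2 * ((p - 1) ^ 2 / p * t ^ 2) = (p - 1) ^ 2 * t ^ 2 / 2 by field_simp] at h3
  rw [show a ^ 2 + (p - 1) ^ 2 / p * (a * t) ^ 2 = a ^ 2 * (1 + (p - 1) ^ 2 / p * t ^ 2) by ring,
    show a + a * t = a * (1 + t) by ring, show a - a * t = a * (1 - t) by ring,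
    Real.mul_rpow (sq_nonneg a) (by linarith), Real.mul_rpow ha.le (by linarith),
    Real.mul_rpow ha.le (by linarith), sq_rpow_half, abs_of_pos ha]
  have h4 : 0 < a ^ p := Real.rpow_pos_of_pos ha p
  nlinarith

lemma two_point_convex {p : ℝ} (hp1 : 1 < p) (hp : p ≤ 2) (a b : ℝ) :
    2 * (a ^ 2 + (p - 1) ^ 2 / p * b ^ 2) ^ (p / 2) ≤ |a + b| ^ p + |a - b| ^ p := by
  rw [abs_add_rpow_add_abs_sub_rpow, ← sq_abs a, ← sq_abs b]
  have hc : (p - 1) ^ 2 / p ≤ 1 := by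
    rw [div_le_one (by linarith)]
    nlinarith
  have hc0 : 0 ≤ (p - 1) ^ 2 / p := by positivity
  rcases le_total |b| |a| with h | h
  · rw [abs_of_nonneg (sub_nonneg.2 h)]
    exact two_point_convex_of_le hp1 hp (abs_nonneg b) h
  · rw [abs_sub_comm, abs_of_nonneg (sub_nonneg.2 h), add_comm |a| |b|]
    refine le_trans ?_ (two_point_convex_of_le hp1 hp (abs_nonneg a) h)
    have h2 : |a| ^ 2 ≤ |b| ^ 2 := by gcongr
    gcongr 2 * ?_ ^ (p / 2)
    nlinarith

lemma two_point_smooth {p : ℝ} (hp : 2 ≤ p) (a b : ℝ) :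
    |a + b| ^ p + |a - b| ^ p ≤ 2 * (a ^ 2 + (1 + 4 * p) * b ^ 2) ^ (p / 2) := by
  rw [abs_add_rpow_add_abs_sub_rpow, ← sq_abs a, ← sq_abs b]
  generalize ha : |a| = x
  generalize hb : |b| = y
  have hx : 0 ≤ x := ha ▸ abs_nonneg a
  have hy : 0 ≤ y := hb ▸ abs_nonneg b
  rcases le_total (2 * x) (4 * p * y) with h | h
  · have h1 : |x - y| ≤ x + y := by
      rw [abs_le]
      constructor <;> linarith
    have h2 : |x - y| ^ p ≤ (x + y) ^ p := by gcongr
    have h3 : (x + y) ^ p ≤ (x ^ 2 + (1 + 4 * p) * y ^ 2) ^ (p / 2) := by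
      rw [← abs_of_nonneg (add_nonneg hx hy), ← sq_rpow_half]
      gcongr
      nlinarith
    linarith
  · have hx0 : x = 0 ∨ 0 < x := hx.eq_or_lt.imp Eq.symm id
    rcases hx0 with rfl | hx0
    · obtain rfl : y = 0 := by nlinarith
      simp [Real.zero_rpow (by linarith : p / 2 ≠ 0), Real.zero_rpow (by linarith : p ≠ 0)]
    obtain ⟨t, rfl⟩ : ∃ t, y = x * t := ⟨y / x, by field_simp⟩
    have ht0 : 0 ≤ t := nonneg_of_mul_nonneg_right hy hx0
    have ht1 : 2 * p * t ≤ 1 := by nlinarith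
    have ht : t ≤ 1 := by nlinarith
    have h1 : (1 + t) ^ p ≤ Real.exp (p * t) := by
      rw [mul_comm, Real.exp_mul]
      gcongr
      linarith [Real.add_one_le_exp t]
    have h2 : (1 - t) ^ p ≤ Real.exp (-(p * t)) := by
      rw [show -(p * t) = -t * p by ring, Real.exp_mul]
      exact Real.rpow_le_rpow (by linarith) (by linarith [Real.add_one_le_exp (-t)]) (by linarith)
    have h3 := Real.cosh_le_exp_half_sq (p * t)
    rw [Real.cosh_eq] at h3
    have h4 : Real.exp ((p * t) ^ 2 / 2) ≤ (1 + (1 + 4 * p) * t ^ 2) ^ (p / 2) := by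
      rw [show (p * t) ^ 2 / 2 = (p * t ^ 2) * (p / 2) by ring, Real.exp_mul]
      have h5 : p * t ^ 2 ≤ 1 / 2 := by nlinarith
      have h6 : 0 ≤ p * t ^ 2 := by positivity
      have h7 := Real.exp_bound_div_one_sub_of_interval h6 (by linarith)
      gcongr
      refine h7.trans ?_
      rw [div_le_iff₀ (by linarith)]
      nlinarith [sq_nonneg t]
    rw [show x ^ 2 + (1 + 4 * p) * (x * t) ^ 2 = x ^ 2 * (1 + (1 + 4 * p) * t ^ 2) by ring,
      show x + x * t = x * (1 + t) by ring, show x - x * t = x * (1 - t) by ring,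
      abs_of_nonneg (mul_nonneg hx (by linarith : 0 ≤ 1 - t)),
      Real.mul_rpow (sq_nonneg x) (by positivity), Real.mul_rpow hx (by linarith),
      Real.mul_rpow hx (by linarith), sq_rpow_half, abs_of_pos hx0]
    have h4 : 0 < x ^ p := Real.rpow_pos_of_pos hx0 p
    nlinarith

lemma add_rpow_le_weighted {r s t S T : ℝ} (hr : 1 ≤ r) (hS : 0 < S) (hT : 0 < T)
    (hs : 0 ≤ s) (ht : 0 ≤ t) :
    (s + t) ^ r ≤ S / (S + T) * ((S + T) / S) ^ r * s ^ r +
      T / (S + T) * ((S + T) / T) ^ r * t ^ r := by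
  have hM : 0 < S + T := by positivity
  have h := (convexOn_rpow hr).2 (x := (S + T) / S * s) (y := (S + T) / T * t)
    (Set.mem_Ici.2 (by positivity)) (Set.mem_Ici.2 (by positivity))
    (by positivity : 0 ≤ S / (S + T)) (by positivity : 0 ≤ T / (S + T)) (by field_simp)
  simp only [smul_eq_mul] at h
  rw [Real.mul_rpow (by positivity) hs, Real.mul_rpow (by positivity) ht] at h
  calc (s + t) ^ r = (S / (S + T) * ((S + T) / S * s) + T / (S + T) * ((S + T) / T * t)) ^ r := by
        congr 1
        field_simp
    _ ≤ _ := h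
    _ = _ := by ring

lemma weighted_le_add_rpow {r s t S T : ℝ} (hr0 : 0 ≤ r) (hr : r ≤ 1) (hS : 0 < S) (hT : 0 < T)
    (hs : 0 ≤ s) (ht : 0 ≤ t) :
    S / (S + T) * ((S + T) / S) ^ r * s ^ r +
      T / (S + T) * ((S + T) / T) ^ r * t ^ r ≤ (s + t) ^ r := by
  have hM : 0 < S + T := by positivity
  have h := (Real.concaveOn_rpow hr0 hr).2 (x := (S + T) / S * s) (y := (S + T) / T * t)
    (Set.mem_Ici.2 (by positivity)) (Set.mem_Ici.2 (by positivity))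
    (by positivity : 0 ≤ S / (S + T)) (by positivity : 0 ≤ T / (S + T)) (by field_simp)
  simp only [smul_eq_mul] at h
  rw [Real.mul_rpow (by positivity) hs, Real.mul_rpow (by positivity) ht] at h
  calc _ = _ := by ring
    _ ≤ _ := h
    _ = (s + t) ^ r := by
        congr 1
        field_simp

lemma weighted_self {r S T : ℝ} (hS : 0 < S) (hT : 0 < T) :
    S / (S + T) * ((S + T) / S) ^ r * S ^ r + T / (S + T) * ((S + T) / T) ^ r * T ^ r
      = (S + T) ^ r := by
  have hM : 0 < S + T := by positivity
  rw [mul_assoc, mul_assoc, ← Real.mul_rpow (by positivity) hS.le,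
    ← Real.mul_rpow (by positivity) hT.le, div_mul_cancel₀ _ hS.ne', div_mul_cancel₀ _ hT.ne',
    ← add_mul, ← add_div, div_self hM.ne', one_mul]

section LpInequalities

variable {S : Type*} [MeasurableSpace S] {μ : Measure S} {p : ℝ≥0∞}

lemma Lp_norm_rpow_toReal (hp0 : p ≠ 0) (hp : p ≠ ∞) (f : Lp ℝ p μ) :
    ‖f‖ ^ p.toReal = ∫ s, |f s| ^ p.toReal ∂μ := by
  have hpos : 0 < p.toReal := ENNReal.toReal_pos hp0 hp
  have hint : 0 ≤ ∫ s, ‖f s‖ ^ p.toReal ∂μ := integral_nonneg fun s ↦ by positivity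
  rw [Lp.norm_def, (Lp.memLp f).eLpNorm_eq_integral_rpow_norm hp0 hp,
    ENNReal.toReal_ofReal (by positivity), Real.rpow_inv_rpow hint hpos.ne']
  rfl

lemma integrable_abs_rpow_Lp (hp0 : p ≠ 0) (hp : p ≠ ∞) (f : Lp ℝ p μ) :
    Integrable (fun s ↦ |f s| ^ p.toReal) μ :=
  (Lp.memLp f).integrable_norm_rpow hp0 hp

/-- A homogeneous pointwise inequality between `p`-th powers integrates to one between norms. -/
lemma Lp_norm_rpow_ineq (hp0 : p ≠ 0) (hp : p ≠ ∞) {k u v : ℝ}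
    (h : ∀ a b : ℝ, 0 ≤ k * (|a + b| ^ p.toReal + |a - b| ^ p.toReal) +
      u * |a| ^ p.toReal + v * |b| ^ p.toReal) (x y : Lp ℝ p μ) :
    0 ≤ k * (‖x + y‖ ^ p.toReal + ‖x - y‖ ^ p.toReal) +
      u * ‖x‖ ^ p.toReal + v * ‖y‖ ^ p.toReal := by
  simp only [Lp_norm_rpow_toReal hp0 hp]
  have i1 := integrable_abs_rpow_Lp hp0 hp (x + y)
  have i2 := integrable_abs_rpow_Lp hp0 hp (x - y)
  have i3 := integrable_abs_rpow_Lp hp0 hp x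
  have i4 := integrable_abs_rpow_Lp hp0 hp y
  have i12 : Integrable (fun s ↦ k * (|(x + y : Lp ℝ p μ) s| ^ p.toReal +
      |(x - y : Lp ℝ p μ) s| ^ p.toReal)) μ := (i1.add i2).const_mul k
  have i123 : Integrable (fun s ↦ k * (|(x + y : Lp ℝ p μ) s| ^ p.toReal +
      |(x - y : Lp ℝ p μ) s| ^ p.toReal) + u * |x s| ^ p.toReal) μ := i12.add (i3.const_mul u)
  rw [← integral_add i1 i2, ← integral_const_mul, ← integral_const_mul, ← integral_const_mul,
    ← integral_add i12 (i3.const_mul u), ← integral_add i123 (i4.const_mul v)]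
  refine integral_nonneg_of_ae ?_
  filter_upwards [Lp.coeFn_add x y, Lp.coeFn_sub x y] with s h1 h2
  simp only [Pi.zero_apply, Pi.add_apply, h1, h2, Pi.sub_apply]
  exact h _ _

variable [Fact (1 ≤ p)]

/-- `L_p` is uniformly convex of power type `max 2 p`. -/
lemma Lp_uniformly_convex (hp1 : 1 < p) (hp : p ≠ ∞) : ∃ c : ℝ, 0 < c ∧ ∀ x y : Lp ℝ p μ,
    ‖x‖ ^ max 2 p.toReal + c * ‖y‖ ^ max 2 p.toReal ≤
      (‖x + y‖ ^ max 2 p.toReal + ‖x - y‖ ^ max 2 p.toReal) / 2 := by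
  have hp0 : p ≠ 0 := (zero_lt_one.trans hp1).ne'
  have hq1 : 1 < p.toReal := by
    rw [← ENNReal.toReal_one]
    exact (ENNReal.toReal_lt_toReal ENNReal.one_ne_top hp).2 hp1
  rcases le_total 2 p.toReal with h2 | h2
  · rw [max_eq_right h2]
    refine ⟨1, one_pos, fun x y ↦ ?_⟩
    have := Lp_norm_rpow_ineq hp0 hp (k := 1) (u := -2) (v := -2)
      (fun a b ↦ by linarith [two_mul_add_rpow_le h2 a b]) x y
    linarith
  rw [max_eq_left h2]
  have key := fun a b ↦ two_point_convex hq1 h2 a b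
  have hc : 0 < (p.toReal - 1) ^ 2 / p.toReal :=
    div_pos (pow_pos (by linarith) 2) (by linarith)
  have hc1 : (p.toReal - 1) ^ 2 / p.toReal ≤ 1 := by
    rw [div_le_one (by linarith)]
    nlinarith
  set c := (p.toReal - 1) ^ 2 / p.toReal
  refine ⟨c, hc, fun x y ↦ ?_⟩
  norm_cast
  rcases (norm_nonneg y).eq_or_lt' with hy | hy
  · obtain rfl := norm_eq_zero.1 hy
    simp
  rcases (norm_nonneg x).eq_or_lt' with hx | hx
  · obtain rfl := norm_eq_zero.1 hx
    simp only [norm_zero, zero_add, zero_sub, norm_neg]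
    nlinarith [sq_nonneg ‖y‖]
  have hX : 0 < ‖x‖ ^ 2 := by positivity
  have hY : 0 < c * ‖y‖ ^ 2 := by positivity
  have hint := Lp_norm_rpow_ineq hp0 hp (k := 1)
    (u := -(2 * (‖x‖ ^ 2 / (‖x‖ ^ 2 + c * ‖y‖ ^ 2) *
      ((‖x‖ ^ 2 + c * ‖y‖ ^ 2) / ‖x‖ ^ 2) ^ (p.toReal / 2))))
    (v := -(2 * (c * ‖y‖ ^ 2 / (‖x‖ ^ 2 + c * ‖y‖ ^ 2) *
      ((‖x‖ ^ 2 + c * ‖y‖ ^ 2) / (c * ‖y‖ ^ 2)) ^ (p.toReal / 2)) * c ^ (p.toReal / 2)))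
    (fun a b ↦ by
      have h1 := weighted_le_add_rpow (r := p.toReal / 2) (by linarith) (by linarith) hX hY
        (sq_nonneg a) (mul_nonneg hc.le (sq_nonneg b))
      rw [Real.mul_rpow hc.le (sq_nonneg b), sq_rpow_half, sq_rpow_half] at h1
      linarith [key a b]) x y
  have hself := weighted_self (r := p.toReal / 2) hX hY
  rw [Real.mul_rpow hc.le (sq_nonneg ‖y‖), sq_rpow_half, sq_rpow_half, abs_norm, abs_norm]
    at hself
  have hconc := half_add_rpow_le (s := p.toReal / 2) (by linarith) (by linarith)
    (sq_nonneg ‖x + y‖) (sq_nonneg ‖x - y‖)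
  rw [sq_rpow_half, sq_rpow_half, abs_norm, abs_norm] at hconc
  refine (Real.rpow_le_rpow_iff (z := p.toReal / 2) (by positivity) (by positivity)
    (by linarith)).1 ?_
  linarith

/-- `L_p` is uniformly smooth of power type `min 2 p`. -/
lemma Lp_uniformly_smooth (hp1 : 1 < p) (hp : p ≠ ∞) : ∃ C : ℝ, 0 < C ∧ ∀ x y : Lp ℝ p μ,
    ‖x + y‖ ^ min 2 p.toReal + ‖x - y‖ ^ min 2 p.toReal ≤
      2 * ‖x‖ ^ min 2 p.toReal + C * ‖y‖ ^ min 2 p.toReal := by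
  have hp0 : p ≠ 0 := (zero_lt_one.trans hp1).ne'
  have hq1 : 1 < p.toReal := by
    rw [← ENNReal.toReal_one]
    exact (ENNReal.toReal_lt_toReal ENNReal.one_ne_top hp).2 hp1
  rcases le_total p.toReal 2 with h2 | h2
  · rw [min_eq_right h2]
    refine ⟨2, two_pos, fun x y ↦ ?_⟩
    have := Lp_norm_rpow_ineq hp0 hp (k := -1) (u := 2) (v := 2)
      (fun a b ↦ by linarith [add_rpow_le_two_mul (by linarith) h2 a b]) x y
    linarith
  rw [min_eq_left h2]
  have key := fun a b ↦ two_point_smooth h2 a b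
  have hc1 : 1 ≤ 1 + 4 * p.toReal := by linarith
  set c := 1 + 4 * p.toReal
  have hc : 0 < c := by linarith
  refine ⟨2 * c, by positivity, fun x y ↦ ?_⟩
  norm_cast
  rcases (norm_nonneg y).eq_or_lt' with hy | hy
  · obtain rfl := norm_eq_zero.1 hy
    simp [two_mul]
  rcases (norm_nonneg x).eq_or_lt' with hx | hx
  · obtain rfl := norm_eq_zero.1 hx
    simp only [norm_zero, zero_add, zero_sub, norm_neg]
    nlinarith [sq_nonneg ‖y‖]
  have hX : 0 < ‖x‖ ^ 2 := by positivity
  have hY : 0 < c * ‖y‖ ^ 2 := by positivity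
  have hint := Lp_norm_rpow_ineq hp0 hp (k := -1)
    (u := 2 * (‖x‖ ^ 2 / (‖x‖ ^ 2 + c * ‖y‖ ^ 2) *
      ((‖x‖ ^ 2 + c * ‖y‖ ^ 2) / ‖x‖ ^ 2) ^ (p.toReal / 2)))
    (v := 2 * (c * ‖y‖ ^ 2 / (‖x‖ ^ 2 + c * ‖y‖ ^ 2) *
      ((‖x‖ ^ 2 + c * ‖y‖ ^ 2) / (c * ‖y‖ ^ 2)) ^ (p.toReal / 2)) * c ^ (p.toReal / 2))
    (fun a b ↦ by
      have h1 := add_rpow_le_weighted (r := p.toReal / 2) (by linarith) hX hY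
        (sq_nonneg a) (mul_nonneg hc.le (sq_nonneg b))
      rw [Real.mul_rpow hc.le (sq_nonneg b), sq_rpow_half, sq_rpow_half] at h1
      linarith [key a b]) x y
  have hself := weighted_self (r := p.toReal / 2) hX hY
  rw [Real.mul_rpow hc.le (sq_nonneg ‖y‖), sq_rpow_half, sq_rpow_half, abs_norm, abs_norm]
    at hself
  have hconv := rpow_half_add_le (s := p.toReal / 2) (by linarith)
    (sq_nonneg ‖x + y‖) (sq_nonneg ‖x - y‖)
  rw [sq_rpow_half, sq_rpow_half, abs_norm, abs_norm] at hconv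
  have : (‖x + y‖ ^ 2 + ‖x - y‖ ^ 2) / 2 ≤ ‖x‖ ^ 2 + c * ‖y‖ ^ 2 := by
    refine (Real.rpow_le_rpow_iff (z := p.toReal / 2) (by positivity) (by positivity)
      (by linarith)).1 ?_
    linarith
  linarith

end LpInequalities

lemma infDist_le_norm_of_zero_mem {X : Type*} [SeminormedAddCommGroup X] {G : Set X}
    (h0 : (0 : X) ∈ G) (x : X) : Metric.infDist x G ≤ ‖x‖ := by
  simpa using Metric.infDist_le_dist_of_mem (x := x) h0

section RecessionDist

open scoped Pointwise

variable {X : Type*} [NormedAddCommGroup X] [NormedSpace ℝ X] {G G' : Set X}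

/-- The limit of the distances from `x` to the shrinking dilates `(m + 1)⁻¹ • G`. For closed convex
`G ∋ 0` in a reflexive space this is the distance to the recession cone of `G`. -/
noncomputable def recessionDist (G : Set X) (x : X) : ℝ :=
  ⨆ m : ℕ, Metric.infDist x (((m : ℝ) + 1)⁻¹ • G)

lemma zero_mem_dilate (h0 : (0 : X) ∈ G) (t : ℝ) : (0 : X) ∈ t • G :=
  ⟨0, h0, smul_zero t⟩

lemma bddAbove_infDist_dilate (h0 : (0 : X) ∈ G) (x : X) :
    BddAbove (Set.range fun m : ℕ ↦ Metric.infDist x (((m : ℝ) + 1)⁻¹ • G)) :=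
  ⟨‖x‖, by rintro _ ⟨m, rfl⟩; exact infDist_le_norm_of_zero_mem (zero_mem_dilate h0 _) x⟩

lemma infDist_dilate_le_recessionDist (h0 : (0 : X) ∈ G) (x : X) (m : ℕ) :
    Metric.infDist x (((m : ℝ) + 1)⁻¹ • G) ≤ recessionDist G x :=
  le_ciSup (bddAbove_infDist_dilate h0 x) m

lemma infDist_le_recessionDist (h0 : (0 : X) ∈ G) (x : X) :
    Metric.infDist x G ≤ recessionDist G x := by
  simpa using infDist_dilate_le_recessionDist h0 x 0

lemma recessionDist_nonneg (h0 : (0 : X) ∈ G) (x : X) : 0 ≤ recessionDist G x :=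
  Metric.infDist_nonneg.trans (infDist_le_recessionDist h0 x)

lemma recessionDist_le_norm_sub_add (h0 : (0 : X) ∈ G) (x y : X) :
    recessionDist G x ≤ ‖x - y‖ + recessionDist G y := by
  refine ciSup_le fun m ↦ ?_
  have h1 := Metric.infDist_le_infDist_add_dist (s := ((m : ℝ) + 1)⁻¹ • G) (x := x) (y := y)
  rw [dist_eq_norm] at h1
  linarith [infDist_dilate_le_recessionDist h0 y m]

lemma tendsto_infDist_dilate (h0 : (0 : X) ∈ G) (hG : Convex ℝ G) (x : X) :
    Filter.Tendsto (fun m : ℕ ↦ Metric.infDist x (((m : ℝ) + 1)⁻¹ • G)) Filter.atTop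
      (nhds (recessionDist G x)) := by
  refine tendsto_atTop_ciSup (fun a b hab ↦ ?_) (bddAbove_infDist_dilate h0 x)
  refine Metric.infDist_le_infDist_of_subset ?_ ⟨0, zero_mem_dilate h0 _⟩
  rintro _ ⟨g, hg, rfl⟩
  have ha : (0 : ℝ) < (a : ℝ) + 1 := by positivity
  have hb : (0 : ℝ) < (b : ℝ) + 1 := by positivity
  have hab' : (a : ℝ) ≤ b := by exact_mod_cast hab
  refine ⟨(((a : ℝ) + 1) / (b + 1)) • g,
    hG.smul_mem_of_zero_mem h0 hg ⟨by positivity, ?_⟩, ?_⟩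
  · rw [div_le_one hb]
    linarith
  · simp only [smul_smul]
    congr 1
    field_simp

/-- A Jackson-type estimate for a positively homogeneous functional passes to `recessionDist`. -/
lemma recessionDist_le_of_jackson {Y : Submodule ℝ X} {NY : X → ℝ}
    (hNY_smul : ∀ (c : ℝ) (g), g ∈ Y → NY (c • g) = |c| * NY g) {K : ℝ}
    (hK : ∀ y ∈ Y, Metric.infDist y G ≤ K * NY y) {y : X} (hy : y ∈ Y) :
    recessionDist G y ≤ K * NY y := by
  refine ciSup_le fun m ↦ ?_
  have hm : (0 : ℝ) < (m : ℝ) + 1 := by positivity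
  have h1 := infDist_smul₀ (inv_ne_zero hm.ne') G (((m : ℝ) + 1) • y)
  rw [smul_smul, inv_mul_cancel₀ hm.ne', one_smul, norm_inv, Real.norm_eq_abs,
    abs_of_pos hm] at h1
  have h2 := hK _ (Y.smul_mem ((m : ℝ) + 1) hy)
  rw [hNY_smul _ _ hy, abs_of_pos hm] at h2
  rw [h1, inv_mul_le_iff₀ hm]
  linarith

/-- In a uniformly smooth space, the recession distances of `f` to two nested symmetric convex sets
differ (in `θ`-th powers) by at most the recession distance to the smaller set of the best
approximant from the larger one. -/
lemma recessionDist_rpow_le {θ C : ℝ} (hθ : 1 ≤ θ) (hC : 0 ≤ C)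
    (hS : ∀ x y : X, ‖x + y‖ ^ θ + ‖x - y‖ ^ θ ≤ 2 * ‖x‖ ^ θ + C * ‖y‖ ^ θ)
    (h0 : (0 : X) ∈ G) (hG : Convex ℝ G) (hsub : G ⊆ G') (hG' : Convex ℝ G')
    (hneg : ∀ g ∈ G', -g ∈ G') {f P : X} (hP : P ∈ G') (hbest : ∀ u ∈ G', ‖f - P‖ ≤ ‖f - u‖) :
    recessionDist G f ^ θ ≤ recessionDist G' f ^ θ + C * recessionDist G P ^ θ := by
  have hθ0 : 0 ≤ θ := by linarith
  have h0' : (0 : X) ∈ G' := hsub h0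
  have hd := recessionDist_nonneg h0 P
  have hd' := recessionDist_nonneg h0' f
  set d := recessionDist G P with hd_def
  set d' := recessionDist G' f with hd'_def
  set M := ‖P‖ + ((‖f‖ + d' + 1) + (‖P‖ + d + 1)) / 2 with hM
  let bound : ℝ → ℝ := fun t ↦ 2 * ‖f - P‖ ^ θ - 2 * (max 0 (‖f - P‖ - t * M)) ^ θ +
    (d' + t) ^ θ + C * (d + t) ^ θ
  have hcont : Continuous bound := by
    have h1 : Continuous fun t : ℝ ↦ (max 0 (‖f - P‖ - t * M)) ^ θ :=
      (by fun_prop : Continuous fun t : ℝ ↦ max 0 (‖f - P‖ - t * M)).rpow_const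
        fun _ ↦ Or.inr hθ0
    have h2 : Continuous fun t : ℝ ↦ (d' + t) ^ θ :=
      (by fun_prop : Continuous fun t : ℝ ↦ d' + t).rpow_const fun _ ↦ Or.inr hθ0
    have h3 : Continuous fun t : ℝ ↦ (d + t) ^ θ :=
      (by fun_prop : Continuous fun t : ℝ ↦ d + t).rpow_const fun _ ↦ Or.inr hθ0
    exact ((continuous_const.sub (continuous_const.mul h1)).add h2).add (continuous_const.mul h3)
  have hbound0 : bound 0 = d' ^ θ + C * d ^ θ := by
    simp [bound]
  have hlim : Filter.Tendsto (fun m : ℕ ↦ bound (((m : ℝ) + 1)⁻¹)) Filter.atTop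
      (nhds (d' ^ θ + C * d ^ θ)) := by
    rw [← hbound0]
    refine (hcont.tendsto 0).comp ?_
    simpa only [one_div] using tendsto_one_div_add_atTop_nhds_zero_nat (𝕜 := ℝ)
  refine le_of_tendsto_of_tendsto'
    ((tendsto_infDist_dilate h0 hG f).rpow_const (Or.inr hθ0)) hlim fun m ↦ ?_
  have ht0 : 0 < ((m : ℝ) + 1)⁻¹ := by positivity
  have ht1 : ((m : ℝ) + 1)⁻¹ ≤ 1 := inv_le_one_of_one_le₀ (by linarith [m.cast_nonneg (α := ℝ)])
  obtain ⟨g, hg, hgd⟩ := (Metric.infDist_lt_iff ⟨0, zero_mem_dilate h0 _⟩).1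
    ((infDist_dilate_le_recessionDist h0 P m).trans_lt (lt_add_of_pos_right _ ht0))
  obtain ⟨w, hw, hwd⟩ := (Metric.infDist_lt_iff ⟨0, zero_mem_dilate h0' _⟩).1
    ((infDist_dilate_le_recessionDist h0' f m).trans_lt (lt_add_of_pos_right _ ht0))
  have hr : Metric.infDist f (((m : ℝ) + 1)⁻¹ • G) ≤ ‖f - g‖ := by
    rw [← dist_eq_norm]
    exact Metric.infDist_le_dist_of_mem hg
  rw [dist_eq_norm] at hgd hwd
  rw [← hd_def] at hgd
  rw [← hd'_def] at hwd
  set t := ((m : ℝ) + 1)⁻¹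
  set h := (1 / 2 : ℝ) • (w - g) with hh
  have hnear : ‖f - P‖ ≤ ‖f - P - h‖ + t * M := by
    obtain ⟨g', hg', rfl⟩ := hg
    obtain ⟨w', hw', rfl⟩ := hw
    have hu' : (1 / 2 : ℝ) • w' + (1 / 2 : ℝ) • (-g') ∈ G' :=
      hG' hw' (hneg _ (hsub hg')) (by norm_num) (by norm_num) (by norm_num)
    have hu : (1 / (1 + t)) • P + (t / (1 + t)) • ((1 / 2 : ℝ) • w' + (1 / 2 : ℝ) • (-g')) ∈ G' :=
      hG' hP hu' (by positivity) (by positivity) (by field_simp)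
    set u := (1 / (1 + t)) • P + (t / (1 + t)) • ((1 / 2 : ℝ) • w' + (1 / 2 : ℝ) • (-g')) with hu_def
    have hPu : P + h = (1 + t) • u := by
      rw [hu_def, smul_add, smul_smul, smul_smul, mul_div_cancel₀ _ (by positivity),
        mul_div_cancel₀ _ (by positivity), one_smul, hh]
      module
    have h1 : ‖u‖ ≤ ‖P + h‖ := by
      rw [hPu, norm_smul, Real.norm_eq_abs, abs_of_pos (by positivity)]
      nlinarith [norm_nonneg u]
    have h2 : ‖h‖ ≤ (‖t • w'‖ + ‖t • g'‖) / 2 := by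
      rw [hh, norm_smul]
      norm_num
      linarith [norm_sub_le (t • w') (t • g')]
    have h3 : ‖t • w'‖ ≤ ‖f‖ + d' + 1 := by
      have := norm_sub_norm_le (t • w') f
      rw [norm_sub_rev] at this
      linarith
    have h4 : ‖t • g'‖ ≤ ‖P‖ + d + 1 := by
      have := norm_sub_norm_le (t • g') P
      rw [norm_sub_rev] at this
      linarith
    have h5 : ‖u‖ ≤ M := by
      linarith [norm_add_le P h]
    have h6 : f - u = (f - P - h) + t • u := by
      have : f - P - h = f - (1 + t) • u := by rw [← hPu]; abel
      rw [this]
      module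
    calc ‖f - P‖ ≤ ‖f - u‖ := hbest u hu
      _ ≤ ‖f - P - h‖ + ‖t • u‖ := h6 ▸ norm_add_le _ _
      _ ≤ ‖f - P - h‖ + t * M := by
        rw [norm_smul, Real.norm_eq_abs, abs_of_pos ht0]
        gcongr
  have hmid : 2 * ‖f - P - h‖ ^ θ ≤ ‖f - w‖ ^ θ + ‖f - P - (P - g)‖ ^ θ := by
    have h1 : ‖f - P - h‖ ≤ (‖f - w‖ + ‖f - P - (P - g)‖) / 2 := by
      have h2 : f - P - h = (1 / 2 : ℝ) • ((f - w) + (f - P - (P - g))) := by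
        rw [hh]
        module
      rw [h2, norm_smul]
      norm_num
      linarith [norm_add_le (f - w) (f - P - (P - g))]
    have h3 := Real.rpow_le_rpow (norm_nonneg _) h1 hθ0
    linarith [rpow_half_add_le hθ (norm_nonneg (f - w)) (norm_nonneg (f - P - (P - g)))]
  have hsm := hS (f - P) (P - g)
  rw [sub_add_sub_cancel] at hsm
  have e1 : Metric.infDist f (t • G) ^ θ ≤ ‖f - g‖ ^ θ :=
    Real.rpow_le_rpow Metric.infDist_nonneg hr hθ0
  have e2 : (max 0 (‖f - P‖ - t * M)) ^ θ ≤ ‖f - P - h‖ ^ θ :=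
    Real.rpow_le_rpow (le_max_left _ _) (max_le (norm_nonneg _) (by linarith)) hθ0
  have e3 : ‖f - w‖ ^ θ ≤ (d' + t) ^ θ := Real.rpow_le_rpow (norm_nonneg _) hwd.le hθ0
  have e4 : C * ‖P - g‖ ^ θ ≤ C * (d + t) ^ θ :=
    mul_le_mul_of_nonneg_left (Real.rpow_le_rpow (norm_nonneg _) hgd.le hθ0) hC
  simp only [bound]
  linarith

end RecessionDist

lemma bestApproxError_eq_infDist {X : Type*} [SeminormedAddCommGroup X] (G : ℕ → Set X) (n : ℕ)
    (f : X) : bestApproxError G n f = Metric.infDist f (G n) := by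
  rw [Metric.infDist_eq_iInf, bestApproxError, iInf]
  congr 1
  ext r
  simp only [Set.mem_ofPred_eq, Set.mem_range, Subtype.exists, dist_eq_norm, exists_prop, eq_comm]

lemma KFunctional_nonneg {X : Type*} [SeminormedAddCommGroup X] {Y : Set X} {NY : X → ℝ}
    (hNY : ∀ g, 0 ≤ NY g) (f : X) {t : ℝ} (ht : 0 ≤ t) : 0 ≤ KFunctional Y NY f t := by
  refine Real.sInf_nonneg ?_
  rintro _ ⟨g, -, rfl⟩
  have := hNY g
  positivity

lemma KFunctional_le {X : Type*} [SeminormedAddCommGroup X] {Y : Set X} {NY : X → ℝ}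
    (hNY : ∀ g, 0 ≤ NY g) (f : X) {t : ℝ} (ht : 0 ≤ t) {g : X} (hg : g ∈ Y) :
    KFunctional Y NY f t ≤ ‖f - g‖ + t * NY g := by
  refine csInf_le ⟨0, ?_⟩ ⟨g, hg, rfl⟩
  rintro _ ⟨g, -, rfl⟩
  have := hNY g
  positivity

lemma two_rpow_neg_mul (α : ℝ) (k : ℕ) : (2 : ℝ) ^ (-(k : ℝ) * α) = ((2 : ℝ) ^ (-α)) ^ k := by
  rw [← Real.rpow_natCast, ← Real.rpow_mul (by norm_num)]
  ring_nf

lemma two_pow_rpow_neg (α : ℝ) (k : ℕ) : ((2 ^ k : ℕ) : ℝ) ^ (-α) = ((2 : ℝ) ^ (-α)) ^ k := by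
  push_cast
  rw [← Real.rpow_natCast, ← Real.rpow_natCast, ← Real.rpow_mul (by norm_num),
    ← Real.rpow_mul (by norm_num), mul_comm]

lemma two_pow_rpow (α : ℝ) (k : ℕ) : ((2 ^ k : ℕ) : ℝ) ^ α = (((2 : ℝ) ^ (-α)) ^ k)⁻¹ := by
  rw [← two_pow_rpow_neg, Real.rpow_neg (by positivity), inv_inv]

/-- In a uniformly convex space, best approximants from convex sets satisfy a Pythagorean
inequality. -/
lemma bestApprox_pythagorean {X : Type*} [NormedAddCommGroup X] [NormedSpace ℝ X] {τ c : ℝ}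
    (hτ : 1 ≤ τ)
    (hU : ∀ x y : X, ‖x‖ ^ τ + c * ‖y‖ ^ τ ≤ (‖x + y‖ ^ τ + ‖x - y‖ ^ τ) / 2)
    {G : Set X} (hG : Convex ℝ G) {f P g : X} (hP : P ∈ G) (hg : g ∈ G)
    (hbest : ∀ u ∈ G, ‖f - P‖ ≤ ‖f - u‖) :
    2 * c * (1 / 2) ^ τ * ‖P - g‖ ^ τ ≤ ‖f - g‖ ^ τ - ‖f - P‖ ^ τ := by
  have h1 := hbest _ (hG hP hg (by norm_num : (0 : ℝ) ≤ 1 / 2) (by norm_num : (0 : ℝ) ≤ 1 / 2)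
    (by norm_num))
  have h2 := hU (f - ((1 / 2 : ℝ) • P + (1 / 2 : ℝ) • g)) ((1 / 2 : ℝ) • (P - g))
  have e1 : f - ((1 / 2 : ℝ) • P + (1 / 2 : ℝ) • g) + (1 / 2 : ℝ) • (P - g) = f - g := by module
  have e2 : f - ((1 / 2 : ℝ) • P + (1 / 2 : ℝ) • g) - (1 / 2 : ℝ) • (P - g) = f - P := by module
  rw [e1, e2, norm_smul, Real.mul_rpow (norm_nonneg _) (norm_nonneg _), Real.norm_eq_abs,
    abs_of_pos (by norm_num : (0 : ℝ) < 1 / 2)] at h2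
  have h3 := Real.rpow_le_rpow (norm_nonneg _) h1 (by linarith : 0 ≤ τ)
  linarith

/-- A discrete Hardy inequality in recursive form. -/
lemma sum_rpow_le_of_recursion {τ ρ b c : ℝ} (hτ : 1 ≤ τ) (hρ0 : 0 < ρ) (hρ1 : ρ < 1)
    (hb : 0 ≤ b) (hc : 0 < c) {δ d a : ℕ → ℝ} (hδ : ∀ k, 0 ≤ δ k) (hd : ∀ k, 0 ≤ d k)
    (ha : ∀ k, 0 ≤ a k) (hrec : ∀ k, δ (k + 1) ≤ ρ * δ k + b * d k)
    (hdec : ∀ k, c * d k ^ τ ≤ a k ^ τ - a (k + 1) ^ τ) (N : ℕ) :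
    (1 - ρ) * ∑ k ∈ Finset.range N, δ (k + 1) ^ τ ≤
      δ 0 ^ τ + (1 - ρ) * (b / (1 - ρ)) ^ τ / c * a 0 ^ τ := by
  have hρ : 0 < 1 - ρ := by linarith
  set K := (1 - ρ) * (b / (1 - ρ)) ^ τ / c
  have hK : 0 ≤ K := by positivity
  have hstep : ∀ k, δ (k + 1) ^ τ + K * a (k + 1) ^ τ + (1 - ρ) * δ k ^ τ ≤
      δ k ^ τ + K * a k ^ τ := by
    intro k
    have h1 := (convexOn_rpow hτ).2 (Set.mem_Ici.2 (hδ k))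
      (Set.mem_Ici.2 (mul_nonneg (by positivity : 0 ≤ b / (1 - ρ)) (hd k))) hρ0.le hρ.le
      (by ring)
    simp only [smul_eq_mul] at h1
    rw [Real.mul_rpow (by positivity) (hd k), ← mul_assoc (1 - ρ), mul_div_cancel₀ _ hρ.ne'] at h1
    have h2 := Real.rpow_le_rpow (hδ _) (hrec k) (by linarith : 0 ≤ τ)
    have h3 := mul_le_mul_of_nonneg_left (hdec k) hK
    have h4 : K * (c * d k ^ τ) = (1 - ρ) * ((b / (1 - ρ)) ^ τ * d k ^ τ) := by
      simp only [K]
      field_simp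
    linarith
  have hsum : ∀ M, (1 - ρ) * ∑ k ∈ Finset.range M, δ k ^ τ + (δ M ^ τ + K * a M ^ τ) ≤
      δ 0 ^ τ + K * a 0 ^ τ := by
    intro M
    induction M with
    | zero => simp
    | succ M ih =>
      rw [Finset.sum_range_succ, mul_add]
      linarith [hstep M]
  have h1 := hsum (N + 1)
  rw [Finset.sum_range_succ', mul_add] at h1
  have h2 := Real.rpow_nonneg (hδ 0) τ
  have h3 := Real.rpow_nonneg (hδ (N + 1)) τ
  have h4 := Real.rpow_nonneg (ha (N + 1)) τ
  have h5 := mul_nonneg hρ.le h2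
  have h6 := mul_nonneg hK h4
  linarith

lemma best_of_bestApproxError {X : Type*} [NormedAddCommGroup X] {G : ℕ → Set X} {P : ℕ → X → X}
    (hP : ∀ (f : X) (n : ℕ), 1 ≤ n → P n f ∈ G n ∧ ‖f - P n f‖ = bestApproxError G n f)
    (f : X) {n : ℕ} (hn : 1 ≤ n) {u : X} (hu : u ∈ G n) : ‖f - P n f‖ ≤ ‖f - u‖ := by
  rw [(hP f n hn).2, bestApproxError_eq_infDist, ← dist_eq_norm]
  exact Metric.infDist_le_dist_of_mem hu

section Approximation

variable {X : Type*} [NormedAddCommGroup X] [NormedSpace ℝ X] {Y : Submodule ℝ X} {NY : X → ℝ}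
  {G : ℕ → Set X} {α : ℝ} {P : ℕ → X → X}

theorem tsum_bestApprox_le_KFunctional {τ c : ℝ} (hτ : 1 ≤ τ) (hc : 0 < c)
    (hU : ∀ x y : X, ‖x‖ ^ τ + c * ‖y‖ ^ τ ≤ (‖x + y‖ ^ τ + ‖x - y‖ ^ τ) / 2)
    (hNY_nonneg : ∀ g, 0 ≤ NY g)
    (hNY_add : ∀ g h, g ∈ Y → h ∈ Y → NY (g + h) ≤ NY g + NY h)
    (hG_zero : (0 : X) ∈ G 1) (hG_mono : Monotone G) (hG_sub : ∀ n : ℕ, G n ⊆ (Y : Set X))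
    (hG_conv : ∀ n : ℕ, Convex ℝ (G n)) (hα : 0 < α) {c₂ : ℝ} (hc₂ : 0 < c₂)
    (bernstein : ∀ n : ℕ, 1 ≤ n → ∀ g₁ ∈ G n, ∀ g₂ ∈ G n,
      NY (g₁ - g₂) ≤ c₂ * (n : ℝ) ^ α * ‖g₁ - g₂‖)
    {C₀ : ℝ} (hC₀ : 0 < C₀)
    (hreal : ∀ (f : X) (n : ℕ), 1 ≤ n →
      realization G NY α n f ≤ C₀ * KFunctional (Y : Set X) NY f ((n : ℝ) ^ (-α)))
    (hP : ∀ (f : X) (n : ℕ), 1 ≤ n → P n f ∈ G n ∧ ‖f - P n f‖ = bestApproxError G n f) :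
    ∃ C : ℝ, 0 < C ∧ ∀ (f : X) (n : ℕ),
      (∑' k : ℕ, ENNReal.ofReal
        (((2 : ℝ) ^ (-((n + 1 + k : ℕ) : ℝ) * α) * NY (P (2 ^ (n + 1 + k)) f)) ^ τ)) ^ (1 / τ)
        ≤ ENNReal.ofReal (C * KFunctional (Y : Set X) NY f ((2 : ℝ) ^ (-(n : ℝ) * α))) := by
  have hτ0 : 0 < τ := by linarith
  simp only [two_rpow_neg_mul]
  have hρ0 : 0 < (2 : ℝ) ^ (-α) := by positivity
  have hρ1 : (2 : ℝ) ^ (-α) < 1 := Real.rpow_lt_one_of_one_lt_of_neg (by norm_num) (by linarith)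
  have hpow : ∀ k : ℕ, 1 ≤ 2 ^ k := fun k ↦ Nat.one_le_two_pow
  have hreal' : ∀ (f : X) (n : ℕ), realization G NY α (2 ^ n) f ≤
      C₀ * KFunctional (Y : Set X) NY f (((2 : ℝ) ^ (-α)) ^ n) := fun f n ↦ by
    have := hreal f (2 ^ n) (hpow n)
    rwa [two_pow_rpow_neg] at this
  have hbern : ∀ k, ∀ g₁ ∈ G (2 ^ k), ∀ g₂ ∈ G (2 ^ k),
      ((2 : ℝ) ^ (-α)) ^ k * NY g₁ ≤ ((2 : ℝ) ^ (-α)) ^ k * NY g₂ + c₂ * ‖g₁ - g₂‖ := by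
    intro k g₁ h₁ g₂ h₂
    have h3 := bernstein _ (hpow k) g₁ h₁ g₂ h₂
    rw [two_pow_rpow] at h3
    have h4 := hNY_add g₂ (g₁ - g₂) (hG_sub _ h₂) (Y.sub_mem (hG_sub _ h₁) (hG_sub _ h₂))
    rw [add_sub_cancel] at h4
    have hk : 0 < ((2 : ℝ) ^ (-α)) ^ k := by positivity
    calc ((2 : ℝ) ^ (-α)) ^ k * NY g₁
        ≤ ((2 : ℝ) ^ (-α)) ^ k * (NY g₂ + c₂ * (((2 : ℝ) ^ (-α)) ^ k)⁻¹ * ‖g₁ - g₂‖) := by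
          gcongr
          linarith
      _ = _ := by field_simp
  set ρ := (2 : ℝ) ^ (-α) with hρ_def
  have hρ : 0 < 1 - ρ := by linarith
  set c' := 2 * c * (1 / 2 : ℝ) ^ τ with hc'_def
  have hc' : 0 < c' := by positivity
  set K := (1 - ρ) * (c₂ / (1 - ρ)) ^ τ / c' with hK_def
  have hK : 0 ≤ K := by positivity
  set D := (((1 + 2 * c₂) * C₀) ^ τ + K * C₀ ^ τ) / (1 - ρ) with hD_def
  have hD : 0 < D := by positivity
  refine ⟨D ^ τ⁻¹, by positivity, fun f n ↦ ?_⟩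
  have hkf : 0 ≤ KFunctional (Y : Set X) NY f (ρ ^ n) :=
    KFunctional_nonneg hNY_nonneg f (by positivity)
  have hreal_n := hreal' f n
  set k₀ := KFunctional (Y : Set X) NY f (ρ ^ n)
  have hbest : ∀ k, ∀ u ∈ G (2 ^ k), ‖f - P (2 ^ k) f‖ ≤ ‖f - u‖ := fun k u hu ↦
    best_of_bestApproxError hP f (hpow k) hu
  have hmem : ∀ k, P (2 ^ k) f ∈ G (2 ^ k) := fun k ↦ (hP f _ (hpow k)).1
  have hmem' : ∀ k, P (2 ^ k) f ∈ G (2 ^ (k + 1)) := fun k ↦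
    hG_mono (Nat.pow_le_pow_right (by norm_num) k.le_succ) (hmem k)
  have hne : {r : ℝ | ∃ g ∈ G (2 ^ n), r = ‖f - g‖ + ((2 ^ n : ℕ) : ℝ) ^ (-α) * NY g}.Nonempty :=
    ⟨_, 0, hG_mono (hpow n) hG_zero, rfl⟩
  have ha0 : ‖f - P (2 ^ n) f‖ ≤ C₀ * k₀ := by
    refine le_trans (le_csInf hne ?_) hreal_n
    rintro _ ⟨g, hg, rfl⟩
    have h1 : 0 ≤ ((2 ^ n : ℕ) : ℝ) ^ (-α) * NY g :=
      mul_nonneg (by positivity) (hNY_nonneg g)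
    linarith [hbest n g hg]
  have hδ0 : ρ ^ n * NY (P (2 ^ n) f) ≤ (1 + 2 * c₂) * (C₀ * k₀) := by
    rw [← div_le_iff₀' (by positivity)]
    refine le_trans (le_csInf hne ?_) hreal_n
    rintro _ ⟨g, hg, rfl⟩
    rw [div_le_iff₀' (by positivity), two_pow_rpow_neg, ← hρ_def]
    have h1 := hbern n _ (hmem n) g hg
    have h2 : ‖P (2 ^ n) f - g‖ ≤ 2 * ‖f - g‖ := by
      have := norm_sub_le (f - g) (f - P (2 ^ n) f)
      rw [sub_sub_sub_cancel_left] at this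
      linarith [hbest n g hg]
    have h3 : 0 ≤ ρ ^ n * NY g := mul_nonneg (by positivity) (hNY_nonneg g)
    have h4 := mul_le_mul_of_nonneg_left h2 hc₂.le
    have h5 : 0 ≤ c₂ * (ρ ^ n * NY g) := by positivity
    have h6 := norm_nonneg (f - g)
    linarith
  have hsum := sum_rpow_le_of_recursion hτ hρ0 hρ1 hc₂.le hc'
    (δ := fun k ↦ ρ ^ (n + k) * NY (P (2 ^ (n + k)) f))
    (d := fun k ↦ ‖P (2 ^ (n + k + 1)) f - P (2 ^ (n + k)) f‖)
    (a := fun k ↦ ‖f - P (2 ^ (n + k)) f‖)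
    (fun k ↦ mul_nonneg (by positivity) (hNY_nonneg _)) (fun k ↦ norm_nonneg _)
    (fun k ↦ norm_nonneg _)
    (fun k ↦ by
      have h1 := hbern (n + k + 1) _ (hmem _) _ (hmem' (n + k))
      calc _ ≤ _ := h1
        _ = _ := by rw [pow_succ]; ring)
    (fun k ↦ bestApprox_pythagorean hτ hU (hG_conv _) (hmem (n + k + 1)) (hmem' (n + k))
      (hbest (n + k + 1)))
  simp only [add_zero] at hsum
  have hbound : ∀ N, ∑ k ∈ Finset.range N,
      (ρ ^ (n + 1 + k) * NY (P (2 ^ (n + 1 + k)) f)) ^ τ ≤ (D ^ τ⁻¹ * k₀) ^ τ := by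
    intro N
    have h1 := hsum N
    have h2 : (ρ ^ n * NY (P (2 ^ n) f)) ^ τ ≤ ((1 + 2 * c₂) * C₀) ^ τ * k₀ ^ τ := by
      rw [← Real.mul_rpow (by positivity) hkf, mul_assoc]
      exact Real.rpow_le_rpow (mul_nonneg (by positivity) (hNY_nonneg _)) hδ0 hτ0.le
    have h3 : K * ‖f - P (2 ^ n) f‖ ^ τ ≤ K * (C₀ ^ τ * k₀ ^ τ) := by
      rw [← Real.mul_rpow hC₀.le hkf]
      gcongr
    rw [Real.mul_rpow (by positivity) hkf, Real.rpow_inv_rpow hD.le hτ0.ne', hD_def,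
      div_mul_eq_mul_div, le_div_iff₀' hρ]
    simp only [show ∀ k, n + 1 + k = n + (k + 1) from fun k ↦ by ring]
    linarith
  rw [one_div, ENNReal.rpow_inv_le_iff hτ0, ENNReal.ofReal_rpow_of_nonneg (by positivity) hτ0.le]
  refine ENNReal.tsum_le_of_sum_range_le fun N ↦ ?_
  rw [← ENNReal.ofReal_sum_of_nonneg fun k _ ↦
    Real.rpow_nonneg (mul_nonneg (by positivity) (hNY_nonneg _)) τ]
  exact ENNReal.ofReal_le_ofReal (hbound N)

theorem KFunctional_le_tsum_bestApprox {θ L : ℝ} (hθ : 1 ≤ θ) (hL : 0 < L)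
    (hS : ∀ x y : X, ‖x + y‖ ^ θ + ‖x - y‖ ^ θ ≤ 2 * ‖x‖ ^ θ + L * ‖y‖ ^ θ)
    (hNY_nonneg : ∀ g, 0 ≤ NY g)
    (hNY_smul : ∀ (c : ℝ) (g), g ∈ Y → NY (c • g) = |c| * NY g)
    (hG_zero : (0 : X) ∈ G 1) (hG_mono : Monotone G) (hG_neg : ∀ (n : ℕ) (g), g ∈ G n → -g ∈ G n)
    (hG_sub : ∀ n : ℕ, G n ⊆ (Y : Set X)) (hG_dense : Dense (⋃ n : ℕ, G (n + 1)))
    (hG_conv : ∀ n : ℕ, Convex ℝ (G n)) (hα : 0 < α) {c₁ : ℝ} (hc₁ : 0 < c₁)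
    (jackson : ∀ f ∈ Y, ∀ n : ℕ, 1 ≤ n → bestApproxError G n f ≤ c₁ * (n : ℝ) ^ (-α) * NY f)
    (hP : ∀ (f : X) (n : ℕ), 1 ≤ n → P n f ∈ G n ∧ ‖f - P n f‖ = bestApproxError G n f) :
    ∃ C : ℝ, 0 < C ∧ ∀ (f : X) (n : ℕ),
      ENNReal.ofReal (KFunctional (Y : Set X) NY f ((2 : ℝ) ^ (-(n : ℝ) * α))) ≤
        ENNReal.ofReal C * (∑' k : ℕ, ENNReal.ofReal
          (((2 : ℝ) ^ (-((n + 1 + k : ℕ) : ℝ) * α) *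
            NY (P (2 ^ (n + 1 + k)) f)) ^ θ)) ^ (1 / θ) := by
  have hθ0 : 0 < θ := by linarith
  simp only [two_rpow_neg_mul]
  have hρ0 : 0 < (2 : ℝ) ^ (-α) := by positivity
  have hρ1 : (2 : ℝ) ^ (-α) < 1 := Real.rpow_lt_one_of_one_lt_of_neg (by norm_num) (by linarith)
  have hpow : ∀ k : ℕ, 1 ≤ 2 ^ k := fun k ↦ Nat.one_le_two_pow
  have hjackson : ∀ k : ℕ, ∀ y ∈ Y,
      recessionDist (G (2 ^ k)) y ≤ c₁ * ((2 : ℝ) ^ (-α)) ^ k * NY y := fun k y hy ↦ by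
    refine recessionDist_le_of_jackson hNY_smul (fun z hz ↦ ?_) hy
    have := jackson z hz (2 ^ k) (hpow k)
    rwa [two_pow_rpow_neg, bestApproxError_eq_infDist] at this
  set ρ := (2 : ℝ) ^ (-α)
  have h0 : ∀ k, (0 : X) ∈ G (2 ^ k) := fun k ↦ hG_mono (hpow k) hG_zero
  have hF0 : ∀ k f, 0 ≤ recessionDist (G (2 ^ k)) f := fun k f ↦ recessionDist_nonneg (h0 k) f
  set B := L * (c₁ / ρ) ^ θ with hB_def
  have hB : 0 < B := by positivity
  set A := 2 ^ θ * (1 + B + (1 / ρ) ^ θ) with hA_def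
  have hA : 0 < A := by positivity
  refine ⟨A ^ θ⁻¹, by positivity, fun f n ↦ ?_⟩
  have hkf : 0 ≤ KFunctional (Y : Set X) NY f (ρ ^ n) :=
    KFunctional_nonneg hNY_nonneg f (by positivity)
  set F : ℕ → ℝ := fun k ↦ recessionDist (G (2 ^ k)) f with hF_def
  set δ : ℕ → ℝ := fun k ↦ ρ ^ k * NY (P (2 ^ k) f) with hδ_def
  have hδ : ∀ k, 0 ≤ δ k := fun k ↦ mul_nonneg (by positivity) (hNY_nonneg _)
  have hmem : ∀ k, P (2 ^ k) f ∈ G (2 ^ k) := fun k ↦ (hP f _ (hpow k)).1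
  have hstep : ∀ k, F k ^ θ ≤ F (k + 1) ^ θ + B * δ (k + 1) ^ θ := by
    intro k
    have h1 := recessionDist_rpow_le hθ hL.le hS (h0 k) (hG_conv _)
      (hG_mono (Nat.pow_le_pow_right (by norm_num) k.le_succ)) (hG_conv _) (hG_neg _)
      (hmem (k + 1)) (fun u hu ↦ best_of_bestApproxError hP f (hpow (k + 1)) hu)
    have h2 : recessionDist (G (2 ^ k)) (P (2 ^ (k + 1)) f) ≤ c₁ / ρ * δ (k + 1) := by
      refine (hjackson k _ (hG_sub _ (hmem (k + 1)))).trans_eq ?_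
      simp only [hδ_def, pow_succ]
      field_simp
    have h3 := Real.rpow_le_rpow (hF0 _ _) h2 hθ0.le
    rw [Real.mul_rpow (by positivity) (hδ _)] at h3
    have h4 := mul_le_mul_of_nonneg_left h3 hL.le
    simp only [hF_def, hB_def]
    linarith
  have hchain : ∀ N, F (n + 1) ^ θ ≤
      F (n + 1 + N) ^ θ + B * ∑ k ∈ Finset.range N, δ (n + 1 + (k + 1)) ^ θ := by
    intro N
    induction N with
    | zero => simp
    | succ N ih =>
      rw [Finset.sum_range_succ]
      have := hstep (n + 1 + N)
      rw [add_assoc (n + 1) N 1] at this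
      linarith
  have hKF : KFunctional (Y : Set X) NY f (ρ ^ n) ≤ F (n + 1) + 1 / ρ * δ (n + 1) := by
    have h1 := KFunctional_le hNY_nonneg f (by positivity : 0 ≤ ρ ^ n)
      (hG_sub _ (hmem (n + 1)))
    have h2 : ‖f - P (2 ^ (n + 1)) f‖ ≤ F (n + 1) := by
      rw [(hP f _ (hpow _)).2, bestApproxError_eq_infDist]
      exact infDist_le_recessionDist (h0 _) f
    have h3 : ρ ^ n * NY (P (2 ^ (n + 1)) f) = 1 / ρ * δ (n + 1) := by
      simp only [hδ_def, pow_succ]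
      field_simp
    linarith
  set k₀ := KFunctional (Y : Set X) NY f (ρ ^ n)
  have hreal : ∀ N, k₀ ^ θ ≤
      A * (F (n + 1 + N) ^ θ + ∑ k ∈ Finset.range (N + 1), δ (n + 1 + k) ^ θ) := by
    intro N
    have h1 : k₀ ^ θ ≤ 2 ^ θ * (F (n + 1) ^ θ + (1 / ρ) ^ θ * δ (n + 1) ^ θ) := by
      have hδ' : 0 ≤ 1 / ρ * δ (n + 1) := mul_nonneg (by positivity) (hδ _)
      have h2 := rpow_half_add_le hθ (hF0 (n + 1) f) hδ'
      have h3 := Real.rpow_le_rpow hkf hKF hθ0.le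
      have h4 : (F (n + 1) + 1 / ρ * δ (n + 1)) ^ θ =
          2 ^ θ * ((F (n + 1) + 1 / ρ * δ (n + 1)) / 2) ^ θ := by
        rw [← Real.mul_rpow (by norm_num) (by linarith [hF0 (n + 1) f]),
          mul_div_cancel₀ _ (by norm_num)]
      rw [← Real.mul_rpow (by positivity) (hδ _)]
      rw [h4] at h3
      refine h3.trans ?_
      gcongr
      refine h2.trans (half_le_self ?_)
      exact add_nonneg (Real.rpow_nonneg (hF0 _ _) _) (Real.rpow_nonneg hδ' _)
    have h2 := hchain N
    have h3 : 0 ≤ ∑ k ∈ Finset.range N, δ (n + 1 + (k + 1)) ^ θ :=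
      Finset.sum_nonneg fun k _ ↦ Real.rpow_nonneg (hδ _) _
    have h4 : 0 ≤ F (n + 1 + N) ^ θ := Real.rpow_nonneg (hF0 _ _) _
    have h5 : 0 ≤ δ (n + 1) ^ θ := Real.rpow_nonneg (hδ _) _
    have h6 : 0 ≤ (1 / ρ) ^ θ := by positivity
    rw [Finset.sum_range_succ', add_zero]
    refine h1.trans ?_
    rw [hA_def, mul_assoc]
    gcongr
    nlinarith [mul_nonneg hB.le h4, mul_nonneg hB.le h5, mul_nonneg h6 h3, mul_nonneg h6 h4]
  have hFlim : Filter.Tendsto F Filter.atTop (nhds 0) := by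
    rw [Metric.tendsto_atTop]
    intro ε hε
    obtain ⟨y, hy, hfy⟩ := Metric.dense_iff.1 hG_dense f (ε / 2) (by positivity)
    obtain ⟨m, hym⟩ := Set.mem_iUnion.1 hfy
    have hyY : y ∈ Y := hG_sub _ hym
    rw [Metric.mem_ball, dist_comm, dist_eq_norm] at hy
    have hlim : Filter.Tendsto (fun k : ℕ ↦ c₁ * ρ ^ k * NY y) Filter.atTop (nhds 0) := by
      simpa using ((tendsto_pow_atTop_nhds_zero_of_lt_one hρ0.le hρ1).const_mul c₁).mul_const
        (NY y)
    obtain ⟨N, hN⟩ := Filter.eventually_atTop.1 (hlim.eventually_lt_const (half_pos hε))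
    refine ⟨N, fun k hk ↦ ?_⟩
    rw [Real.dist_eq, sub_zero, abs_of_nonneg (hF0 k f)]
    have h1 := recessionDist_le_norm_sub_add (h0 k) f y
    linarith [hN k hk, hjackson k y hyY]
  have hshift : Filter.Tendsto (fun N ↦ F (n + 1 + N)) Filter.atTop (nhds 0) := by
    simpa only [add_comm] using (Filter.tendsto_add_atTop_iff_nat (n + 1)).2 hFlim
  have hlim : Filter.Tendsto (fun N ↦ ENNReal.ofReal A * (ENNReal.ofReal (F (n + 1 + N) ^ θ) +
      ∑' k, ENNReal.ofReal (δ (n + 1 + k) ^ θ))) Filter.atTop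
      (nhds (ENNReal.ofReal A * ∑' k, ENNReal.ofReal (δ (n + 1 + k) ^ θ))) := by
    have h1 := ENNReal.tendsto_ofReal (hshift.rpow_const (p := θ) (Or.inr hθ0.le))
    rw [Real.zero_rpow hθ0.ne', ENNReal.ofReal_zero] at h1
    have h2 := ENNReal.Tendsto.const_mul
      (h1.add_const (∑' k, ENNReal.ofReal (δ (n + 1 + k) ^ θ)))
      (Or.inr (ENNReal.ofReal_ne_top (r := A)))
    rwa [zero_add] at h2
  have hfinal : ENNReal.ofReal (k₀ ^ θ) ≤
      ENNReal.ofReal A * ∑' k, ENNReal.ofReal (δ (n + 1 + k) ^ θ) := by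
    refine ge_of_tendsto' hlim fun N ↦ ?_
    refine (ENNReal.ofReal_le_ofReal (hreal N)).trans ?_
    rw [ENNReal.ofReal_mul hA.le, ENNReal.ofReal_add (Real.rpow_nonneg (hF0 _ _) _)
      (Finset.sum_nonneg fun k _ ↦ Real.rpow_nonneg (hδ _) _),
      ENNReal.ofReal_sum_of_nonneg fun k _ ↦ Real.rpow_nonneg (hδ _) _]
    gcongr
    exact ENNReal.sum_le_tsum _
  rw [one_div, ← ENNReal.ofReal_rpow_of_nonneg hA.le (by positivity),
    ← ENNReal.mul_rpow_of_nonneg _ _ (by positivity), ENNReal.le_rpow_inv_iff hθ0,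
    ENNReal.ofReal_rpow_of_nonneg hkf hθ0.le]
  exact hfinal

end Approximation

/-- For `X = L_p(μ)` with `1 < p < ∞`, convex sets `G_n`, and the Jackson,
Bernstein and realization assumptions, the best approximants satisfy, with `τ = max(2,p)` and
`θ = min(2,p)`,
`(∑_{k>n} 2^{-kατ} ‖P_{2^k}(f)‖_Y^τ)^{1/τ} ≲ K(f,2^{-nα};L_p,Y)
  ≲ (∑_{k>n} 2^{-kαθ} ‖P_{2^k}(f)‖_Y^θ)^{1/θ}`. -/
theorem stmt8 {S : Type*} [MeasurableSpace S] (μ : Measure S)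
    (p : ℝ≥0∞) [Fact (1 ≤ p)] (hp1 : 1 < p) (hp2 : p ≠ ∞)
    (Y : Submodule ℝ (Lp ℝ p μ)) (NY : Lp ℝ p μ → ℝ)
    (hNY_nonneg : ∀ g, 0 ≤ NY g)
    (hNY_add : ∀ g h, g ∈ Y → h ∈ Y → NY (g + h) ≤ NY g + NY h)
    (hNY_smul : ∀ (c : ℝ) (g), g ∈ Y → NY (c • g) = |c| * NY g)
    (G : ℕ → Set (Lp ℝ p μ))
    (hG_zero : (0 : Lp ℝ p μ) ∈ G 1)
    (hG_mono : ∀ n : ℕ, G n ⊆ G (n + 1))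
    (hG_neg : ∀ (n : ℕ) (g), g ∈ G n → -g ∈ G n)
    (hG_sub : ∀ n : ℕ, G n ⊆ (Y : Set (Lp ℝ p μ)))
    (hG_dense : Dense (⋃ n : ℕ, G (n + 1)))
    (hG_conv : ∀ n : ℕ, Convex ℝ (G n))
    (α : ℝ) (hα : 0 < α)
    (c₁ c₂ : ℝ) (hc₁ : 0 < c₁) (hc₂ : 0 < c₂)
    (jackson : ∀ f ∈ Y, ∀ n : ℕ, 1 ≤ n →
      bestApproxError G n f ≤ c₁ * (n : ℝ) ^ (-α) * NY f)
    (bernstein : ∀ n : ℕ, 1 ≤ n → ∀ g₁ ∈ G n, ∀ g₂ ∈ G n,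
      NY (g₁ - g₂) ≤ c₂ * (n : ℝ) ^ α * ‖g₁ - g₂‖)
    (C₀ : ℝ) (hC₀ : 0 < C₀)
    (hreal : ∀ (f : Lp ℝ p μ) (n : ℕ), 1 ≤ n →
      realization G NY α n f ≤ C₀ * KFunctional (Y : Set (Lp ℝ p μ)) NY f ((n : ℝ) ^ (-α)))
    (P : ℕ → Lp ℝ p μ → Lp ℝ p μ)
    (hP : ∀ (f : Lp ℝ p μ) (n : ℕ), 1 ≤ n →
      P n f ∈ G n ∧ ‖f - P n f‖ = bestApproxError G n f) :
    ∃ C : ℝ, 0 < C ∧ ∀ (f : Lp ℝ p μ) (n : ℕ), 1 ≤ n →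
      (∑' k : ℕ,
          ENNReal.ofReal
            (((2 : ℝ) ^ (-((n + 1 + k : ℕ) : ℝ) * α) * NY (P (2 ^ (n + 1 + k)) f)) ^
              max 2 p.toReal)) ^ (1 / max 2 p.toReal)
        ≤ ENNReal.ofReal
            (C * KFunctional (Y : Set (Lp ℝ p μ)) NY f ((2 : ℝ) ^ (-(n : ℝ) * α))) ∧
      ENNReal.ofReal (KFunctional (Y : Set (Lp ℝ p μ)) NY f ((2 : ℝ) ^ (-(n : ℝ) * α)))
        ≤ ENNReal.ofReal C *
          (∑' k : ℕ,
            ENNReal.ofReal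
              (((2 : ℝ) ^ (-((n + 1 + k : ℕ) : ℝ) * α) * NY (P (2 ^ (n + 1 + k)) f)) ^
                min 2 p.toReal)) ^ (1 / min 2 p.toReal) := by
  have hG_mono' : Monotone G := monotone_nat_of_le_succ hG_mono
  have hq1 : 1 < p.toReal := by
    rw [← ENNReal.toReal_one]
    exact (ENNReal.toReal_lt_toReal ENNReal.one_ne_top hp2).2 hp1
  obtain ⟨c, hc, hU⟩ := Lp_uniformly_convex (μ := μ) hp1 hp2
  obtain ⟨L, hL, hS⟩ := Lp_uniformly_smooth (μ := μ) hp1 hp2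
  obtain ⟨C₁, hC₁, h₁⟩ := tsum_bestApprox_le_KFunctional
    (one_le_two.trans (le_max_left 2 p.toReal)) hc hU hNY_nonneg hNY_add hG_zero hG_mono' hG_sub
    hG_conv hα hc₂ bernstein hC₀ hreal hP
  obtain ⟨C₂, hC₂, h₂⟩ := KFunctional_le_tsum_bestApprox
    (le_min one_le_two hq1.le) hL hS hNY_nonneg hNY_smul hG_zero hG_mono' hG_neg hG_sub hG_dense
    hG_conv hα hc₁ jackson hP
  refine ⟨max C₁ C₂, lt_max_of_lt_left hC₁, fun f n _ ↦
    ⟨(h₁ f n).trans (ENNReal.ofReal_le_ofReal ?_), (h₂ f n).trans ?_⟩⟩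
  · exact mul_le_mul_of_nonneg_right (le_max_left _ _)
      (KFunctional_nonneg hNY_nonneg f (by positivity))
  · gcongr
    exact le_max_right _ _
end

section
/- Let f ∈ C(𝕋) and r, n ∈ ℕ. Then 2^{-nr}‖(V_{2^n}f)^{(r)}‖_{L_∞(𝕋)} ≤ C·ω_r(f, 2^{-n})_∞ and ω_r(f, 2^{-n})_∞ ≤ C·Σ_{k=n+1}^∞ 2^{-kr}‖(V_{2^k}f)^{(r)}‖_{L_∞(𝕋)}, with C independent of f and n. -/
open scoped ENNReal
open MeasureTheory

/-- Lebesgue measure on the fundamental interval `[0,2π]` of the circle `𝕋`. -/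
noncomputable def circleMeasure : Measure ℝ :=
  volume.restrict (Set.Icc 0 (2 * Real.pi))

/-- `f` is `2π`-periodic. -/
def Periodic2PiOne (f : ℝ → ℂ) : Prop :=
  ∀ x : ℝ, f (x + 2 * Real.pi) = f x

/-- Forward difference `Δ_h f = f(·+h) − f(·)`. -/
def cDiffOne (h : ℝ) (f : ℝ → ℂ) : ℝ → ℂ :=
  fun x => f (x + h) - f x

/-- Modulus of smoothness `ω_r(f,δ)_p = sup_{|h|≤δ} ‖Δ_h^r f‖_{L_p(𝕋)}`. -/
noncomputable def modSmoothOne (r : ℕ) (p : ℝ≥0∞) (f : ℝ → ℂ) (δ : ℝ) : ℝ≥0∞ :=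
  ⨆ h : {h : ℝ // |h| ≤ δ}, eLpNorm ((cDiffOne h.1)^[r] f) p circleMeasure

/-- Trigonometric polynomials of degree at most `n` on `𝕋`. -/
def TrigPolyOne (n : ℝ) : Set (ℝ → ℂ) :=
  {T | ∃ (s : Finset ℤ) (c : ℤ → ℂ), (∀ k ∈ s, |(k : ℝ)| ≤ n) ∧
    ∀ x : ℝ, T x = ∑ k ∈ s, c k * Complex.exp (Complex.I * k * x)}

/-- The de la Vallée Poussin-type kernel
`K_n(t) = 1/2 + ∑_{k=1}^{2n} cos kt + ∑_{k=2n+1}^{4n−1} ((4n−k)/(2n)) cos kt`. -/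
noncomputable def vdpInterpKernel (n : ℕ) (t : ℝ) : ℝ :=
  1 / 2 + ∑ k ∈ Finset.Icc 1 (2 * n), Real.cos (k * t) +
    ∑ k ∈ Finset.Icc (2 * n + 1) (4 * n - 1), (((4 * n : ℝ) - k) / (2 * n)) * Real.cos (k * t)

/-- The interpolation analogue of the de la Vallée Poussin means
`V_n f(t) = (1/(3n)) ∑_{k=0}^{6n−1} f(t_k) K_n(t − t_k)`, `t_k = πk/(3n)`. -/
noncomputable def vdpInterp (n : ℕ) (f : ℝ → ℂ) (t : ℝ) : ℂ :=
  (1 / (3 * n) : ℝ) • ∑ k ∈ Finset.range (6 * n),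
    f (Real.pi * k / (3 * n)) * ((vdpInterpKernel n (t - Real.pi * k / (3 * n)) : ℝ) : ℂ)

/-- The uniform norm of a function on the line, with values in `[0,∞]`. -/
noncomputable def supNormE (g : ℝ → ℂ) : ℝ≥0∞ := ⨆ x, ‖g x‖ₑ

theorem enorm_le_supNormE (g : ℝ → ℂ) (x : ℝ) : ‖g x‖ₑ ≤ supNormE g :=
  le_iSup (fun x => ‖g x‖ₑ) x

theorem supNormE_le {g : ℝ → ℂ} {A : ℝ≥0∞} (h : ∀ x, ‖g x‖ₑ ≤ A) : supNormE g ≤ A :=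
  iSup_le h

theorem supNormE_add_le (f g : ℝ → ℂ) : supNormE (f + g) ≤ supNormE f + supNormE g :=
  supNormE_le fun x => (enorm_add_le _ _).trans
    (add_le_add (enorm_le_supNormE f x) (enorm_le_supNormE g x))

theorem supNormE_sub_le (f g : ℝ → ℂ) : supNormE (f - g) ≤ supNormE f + supNormE g :=
  supNormE_le fun x => (enorm_sub_le).trans
    (add_le_add (enorm_le_supNormE f x) (enorm_le_supNormE g x))

theorem supNormE_comp_add (f : ℝ → ℂ) (h : ℝ) : supNormE (fun x => f (x + h)) = supNormE f :=
  (Equiv.addRight h).iSup_comp (g := fun x => ‖f x‖ₑ)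

theorem eLpNorm_top_circleMeasure {g : ℝ → ℂ} (hc : Continuous g) (hp : Periodic2PiOne g) :
    eLpNorm g ∞ circleMeasure = supNormE g := by
  rw [eLpNorm_exponent_top]
  apply le_antisymm
  · exact eLpNormEssSup_le_of_ae_enorm_bound (Filter.Eventually.of_forall (enorm_le_supNormE g))
  · have hae := ae_le_eLpNormEssSup (f := g) (μ := circleMeasure)
    set A := eLpNormEssSup g circleMeasure
    have hcl : IsClosed {x | ‖g x‖ₑ ≤ A} := isClosed_le hc.enorm continuous_const
    have hIoo : Set.Ioo 0 (2 * Real.pi) ⊆ {x | ‖g x‖ₑ ≤ A} := by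
      intro x hx
      by_contra hn
      have hopen : IsOpen ({x | ‖g x‖ₑ ≤ A}ᶜ ∩ Set.Ioo 0 (2 * Real.pi)) :=
        hcl.isOpen_compl.inter isOpen_Ioo
      have hpos := hopen.measure_pos volume ⟨x, hn, hx⟩
      have hz : circleMeasure {x | ‖g x‖ₑ ≤ A}ᶜ = 0 := hae
      rw [circleMeasure, Measure.restrict_apply hcl.isOpen_compl.measurableSet] at hz
      exact hpos.ne' (measure_mono_null
        (Set.inter_subset_inter_right _ Set.Ioo_subset_Icc_self) hz)
    have hIcc : Set.Icc 0 (2 * Real.pi) ⊆ {x | ‖g x‖ₑ ≤ A} := by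
      rw [← closure_Ioo (by positivity)]
      exact closure_minimal hIoo hcl
    refine supNormE_le fun x => ?_
    have hper : Function.Periodic g (2 * Real.pi) := hp
    obtain ⟨y, hy, hxy⟩ := hper.exists_mem_Ico₀ (by positivity) x
    rw [hxy]
    exact hIcc (Set.Ico_subset_Icc_self hy)

/-- The trigonometric sum with frequencies in `s` and coefficients `c`. -/
noncomputable def trigSum (s : Finset ℤ) (c : ℤ → ℂ) (x : ℝ) : ℂ :=
  ∑ j ∈ s, c j * Complex.exp (Complex.I * j * x)

theorem continuous_trigSum (s : Finset ℤ) (c : ℤ → ℂ) : Continuous (trigSum s c) := by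
  unfold trigSum; fun_prop

theorem trigSum_periodic (s : Finset ℤ) (c : ℤ → ℂ) : Periodic2PiOne (trigSum s c) := by
  intro x
  refine Finset.sum_congr rfl fun j _ => ?_
  congr 1
  rw [Complex.exp_eq_exp_iff_exists_int]
  exact ⟨j, by push_cast; ring⟩

theorem deriv_trigSum (s : Finset ℤ) (c : ℤ → ℂ) :
    deriv (trigSum s c) = trigSum s fun j => (Complex.I * j) * c j := by
  funext x
  have h : ∀ j ∈ s, HasDerivAt (fun x : ℝ => c j * Complex.exp (Complex.I * j * x))
      ((Complex.I * j) * c j * Complex.exp (Complex.I * j * x)) x := by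
    intro j _
    have h1 : HasDerivAt (fun x : ℝ => Complex.I * j * (x : ℂ)) (Complex.I * j * 1) x :=
      (Complex.ofRealCLM.hasDerivAt (x := x)).const_mul _
    exact (h1.cexp.const_mul (c j)).congr_deriv (by ring)
  exact (HasDerivAt.fun_sum h).deriv

theorem differentiable_trigSum (s : Finset ℤ) (c : ℤ → ℂ) : Differentiable ℝ (trigSum s c) := by
  unfold trigSum
  have : Differentiable ℝ fun x : ℝ => (x : ℂ) := Complex.ofRealCLM.differentiable
  fun_prop

theorem iterate_deriv_trigSum (s : Finset ℤ) (c : ℤ → ℂ) (r : ℕ) :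
    deriv^[r] (trigSum s c) = trigSum s fun j => (Complex.I * j) ^ r * c j := by
  induction r with
  | zero => simp
  | succ r ih =>
    rw [Function.iterate_succ_apply', ih, deriv_trigSum]
    congr 1; funext j; ring

theorem iterate_cDiffOne_trigSum (s : Finset ℤ) (c : ℤ → ℂ) (h : ℝ) (r : ℕ) :
    (cDiffOne h)^[r] (trigSum s c) =
      trigSum s fun j => (Complex.exp (Complex.I * j * h) - 1) ^ r * c j := by
  induction r with
  | zero => simp
  | succ r ih =>
    rw [Function.iterate_succ_apply', ih]
    funext x
    simp only [cDiffOne, trigSum]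
    rw [← Finset.sum_sub_distrib]
    refine Finset.sum_congr rfl fun j _ => ?_
    push_cast
    rw [mul_add, Complex.exp_add]
    ring

open scoped FourierTransform in
/-- A Schwartz function defines Fourier multipliers that are bounded in the uniform norm,
uniformly in the dilation. -/
theorem SchwartzMap.exists_supNormE_multiplier_le (φ : SchwartzMap ℝ ℂ) :
    ∃ C : ℝ≥0∞, C ≠ ∞ ∧ ∀ (a : ℝ) (s : Finset ℤ) (c : ℤ → ℂ),
      supNormE (trigSum s fun j => φ (a * j) * c j) ≤ C * supNormE (trigSum s c) := by
  have hint : Integrable (fun ξ => (𝓕 φ) ξ) := (𝓕 φ).integrable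
  refine ⟨∫⁻ ξ, ‖(𝓕 φ) ξ‖ₑ, hint.hasFiniteIntegral.ne, fun a s c => supNormE_le fun x => ?_⟩
  have hinv : ∀ u : ℝ, φ u = ∫ ξ : ℝ, Complex.exp (2 * Real.pi * Complex.I * ξ * u) * (𝓕 φ) ξ := by
    intro u
    have h1 : φ u = (𝓕⁻ (𝓕 φ)) u := by rw [FourierTransform.fourierInv_fourier_eq]
    rw [h1, SchwartzMap.fourierInv_coe, Real.fourierInv_eq']
    refine integral_congr_ae (Filter.Eventually.of_forall fun ξ => ?_)
    simp only [smul_eq_mul]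
    congr 2
    simp
    ring
  have hintE : ∀ u : ℝ, Integrable
      (fun ξ : ℝ => Complex.exp (2 * Real.pi * Complex.I * ξ * u) * (𝓕 φ) ξ) := by
    intro u
    refine hint.bdd_mul (c := 1) (by fun_prop) (Filter.Eventually.of_forall fun ξ => ?_)
    rw [show (2 * Real.pi * Complex.I * ξ * u : ℂ) = ((2 * Real.pi * ξ * u : ℝ) : ℂ) * Complex.I by
      push_cast; ring, Complex.norm_exp_ofReal_mul_I]
  have key : trigSum s (fun j => φ (a * j) * c j) x =
      ∫ ξ : ℝ, (𝓕 φ) ξ * trigSum s c (x + 2 * Real.pi * a * ξ) := by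
    simp only [trigSum, Finset.mul_sum]
    have e : ∀ j : ℤ, ∀ ξ : ℝ, (𝓕 φ) ξ *
        (c j * Complex.exp (Complex.I * j * ((x + 2 * Real.pi * a * ξ : ℝ) : ℂ))) =
        (c j * Complex.exp (Complex.I * j * x)) *
        (Complex.exp (2 * Real.pi * Complex.I * ξ * ((a * j : ℝ) : ℂ)) * (𝓕 φ) ξ) := by
      intro j ξ
      push_cast
      rw [show (Complex.I * j * (x + 2 * Real.pi * a * ξ) : ℂ) =
        Complex.I * j * x + 2 * Real.pi * Complex.I * ξ * (a * j) by ring, Complex.exp_add]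
      ring
    simp only [e]
    rw [integral_finsetSum _ fun j _ => (hintE _).const_mul _]
    refine Finset.sum_congr rfl fun j _ => ?_
    rw [integral_const_mul, ← hinv]
    ring
  rw [key]
  calc _ ≤ ∫⁻ ξ : ℝ, ‖(𝓕 φ) ξ * trigSum s c (x + 2 * Real.pi * a * ξ)‖ₑ :=
        enorm_integral_le_lintegral_enorm _
    _ ≤ ∫⁻ ξ : ℝ, ‖(𝓕 φ) ξ‖ₑ * supNormE (trigSum s c) := by
        refine lintegral_mono fun ξ => ?_
        rw [enorm_mul]
        gcongr
        exact enorm_le_supNormE _ _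
    _ = _ := by
        rw [lintegral_mul_const'' _ hint.aestronglyMeasurable.enorm]

/-- The even cosine sum `g 0 + 2 ∑_{1 ≤ k < M} g k cos kt`. -/
noncomputable def cosSum (g : ℕ → ℝ) (M : ℕ) (t : ℝ) : ℝ :=
  g 0 + 2 * ∑ k ∈ Finset.Ico 1 M, g k * Real.cos (k * t)

theorem cosSum_eq_sum_exp (g : ℕ → ℝ) {M : ℕ} (hM : 1 ≤ M) (t : ℝ) :
    (cosSum g M t : ℂ) =
      ∑ j ∈ Finset.Ioo (-M : ℤ) M, (g j.natAbs : ℂ) * Complex.exp (Complex.I * j * t) := by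
  induction M, hM using Nat.le_induction with
  | base =>
    have : Finset.Ioo (-(1 : ℕ) : ℤ) (1 : ℕ) = {0} := by ext; simp; omega
    rw [this]
    simp [cosSum]
  | succ M hM ih =>
    have hset : Finset.Ioo (-(M + 1 : ℕ) : ℤ) (M + 1 : ℕ) =
        insert (M : ℤ) (insert (-M : ℤ) (Finset.Ioo (-M : ℤ) M)) := by
      ext; simp; omega
    rw [hset, Finset.sum_insert (by simp; omega), Finset.sum_insert (by simp), ← ih]
    simp only [cosSum, Finset.sum_Ico_succ_top hM]
    push_cast
    rw [Complex.cos]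
    simp only [Int.natAbs_neg, Int.natAbs_natCast]
    rw [show (Complex.I * M * t : ℂ) = M * t * Complex.I by ring,
      show (Complex.I * -M * t : ℂ) = -(M * t) * Complex.I by ring]
    ring

theorem sum_exp_equispaced {N : ℕ} (hN : 0 < N) (j : ℤ) :
    ∑ k ∈ Finset.range N, Complex.exp (Complex.I * j * (2 * Real.pi * k / N)) =
      if (N : ℤ) ∣ j then (N : ℂ) else 0 := by
  have hN' : (N : ℂ) ≠ 0 := by exact_mod_cast hN.ne'
  set z : ℂ := Complex.exp (Complex.I * j * (2 * Real.pi / N)) with hz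
  have hpow : ∀ k : ℕ, Complex.exp (Complex.I * j * (2 * Real.pi * k / N)) = z ^ k := by
    intro k
    rw [hz, ← Complex.exp_nat_mul]
    congr 1; ring
  have hzN : z ^ N = 1 := by
    rw [← hpow, Complex.exp_eq_one_iff]
    exact ⟨j, by field_simp⟩
  have hz1 : z = 1 ↔ (N : ℤ) ∣ j := by
    rw [hz, Complex.exp_eq_one_iff]
    constructor
    · rintro ⟨m, hm⟩
      refine ⟨m, ?_⟩
      have hpi : (Real.pi : ℂ) ≠ 0 := by exact_mod_cast Real.pi_ne_zero
      field_simp at hm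
      exact_mod_cast hm
    · rintro ⟨m, rfl⟩
      exact ⟨m, by push_cast; field_simp⟩
  simp only [hpow]
  split_ifs with h
  · simp [hz1.2 h]
  · have hne : z ≠ 1 := fun h' => h (hz1.1 h')
    rw [geom_sum_eq hne, hzN]; simp

theorem sum_cosSum_equispaced (g : ℕ → ℝ) {M N : ℕ} (hM : 1 ≤ M) (hMN : M ≤ N) (t : ℝ) :
    ∑ k ∈ Finset.range N, cosSum g M (t - 2 * Real.pi * k / N) = N * g 0 := by
  have hN : 0 < N := by omega
  have : ((∑ k ∈ Finset.range N, cosSum g M (t - 2 * Real.pi * k / N) : ℝ) : ℂ) =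
      ((N * g 0 : ℝ) : ℂ) := by
    rw [Complex.ofReal_sum]
    simp only [cosSum_eq_sum_exp g hM]
    rw [Finset.sum_comm]
    have e : ∀ j : ℤ, ∑ k ∈ Finset.range N, (g j.natAbs : ℂ) *
        Complex.exp (Complex.I * j * ((t - 2 * Real.pi * k / N : ℝ) : ℂ)) =
        (g j.natAbs : ℂ) * Complex.exp (Complex.I * j * t) *
          if (N : ℤ) ∣ -j then (N : ℂ) else 0 := by
      intro j
      rw [← sum_exp_equispaced hN, Finset.mul_sum]
      refine Finset.sum_congr rfl fun k _ => ?_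
      rw [mul_assoc (g j.natAbs : ℂ), ← Complex.exp_add]
      push_cast
      congr 2; ring
    simp only [e]
    rw [Finset.sum_eq_single 0]
    · simp; ring
    · intro j hj hj0
      rw [if_neg, mul_zero]
      intro hd
      rw [Finset.mem_Ioo] at hj
      exact hj0 (Int.eq_zero_of_abs_lt_dvd (dvd_neg.1 hd) (by rw [abs_lt]; omega))
    · intro h; exact absurd (Finset.mem_Ioo.2 (by constructor <;> omega)) h
  exact_mod_cast this

/-- The Fejér kernel as the squared modulus of a geometric sum. -/
theorem cosSum_fejer_eq (m : ℕ) (t : ℝ) :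
    cosSum (fun k => (m : ℝ) - k) m t =
      Complex.normSq (∑ j ∈ Finset.range m, Complex.exp (Complex.I * j * t)) := by
  induction m with
  | zero => simp [cosSum]
  | succ m ih =>
    rw [Finset.sum_range_succ, Complex.normSq_add, ← ih]
    have h1 : Complex.normSq (Complex.exp (Complex.I * m * t)) = 1 := by
      rw [Complex.normSq_eq_norm_sq, show (Complex.I * m * t : ℂ) = ((m * t : ℝ) : ℂ) * Complex.I by
        push_cast; ring, Complex.norm_exp_ofReal_mul_I, one_pow]
    have h2 : ((∑ j ∈ Finset.range m, Complex.exp (Complex.I * j * t)) *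
        (starRingEnd ℂ) (Complex.exp (Complex.I * m * t))).re =
        ∑ k ∈ Finset.Ico 1 (m + 1), Real.cos (k * t) := by
      rw [Finset.sum_mul, Complex.re_sum, Finset.sum_Ico_eq_sum_range, Nat.add_sub_cancel,
        ← Finset.sum_range_reflect (fun j => Real.cos ((1 + j : ℕ) * t))]
      refine Finset.sum_congr rfl fun j hj => ?_
      rw [Finset.mem_range] at hj
      rw [← Complex.exp_conj, ← Complex.exp_add]
      have e : 1 + (m - 1 - j) = m - j := by omega
      rw [e, Nat.cast_sub hj.le]
      have : Complex.I * j * t + (starRingEnd ℂ) (Complex.I * m * t) =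
          ((-((m - j) * t) : ℝ) : ℂ) * Complex.I := by
        simp; ring
      rw [this, Complex.exp_ofReal_mul_I_re, Real.cos_neg]
    rw [h1, h2]
    have h3 : cosSum (fun k => (m : ℝ) - k) m t = cosSum (fun k => (m : ℝ) - k) (m + 1) t := by
      simp only [cosSum]
      rcases Nat.eq_zero_or_pos m with rfl | hm
      · simp
      · rw [Finset.sum_Ico_succ_top hm]; simp
    rw [h3]
    simp only [cosSum, Nat.cast_add, Nat.cast_one, Nat.cast_zero]
    have h4 : ∀ k : ℕ, ((m : ℝ) + 1 - k) * Real.cos (k * t) =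
        ((m : ℝ) - k) * Real.cos (k * t) + Real.cos (k * t) := fun k => by ring
    simp only [h4, Finset.sum_add_distrib]
    ring

theorem cosSum_fejer_nonneg (m : ℕ) (t : ℝ) : 0 ≤ cosSum (fun k => (m : ℝ) - k) m t := by
  rw [cosSum_fejer_eq]; exact Complex.normSq_nonneg _

/-- The Fourier coefficients of the doubled de la Vallée Poussin kernel. -/
noncomputable def vdpCoeff (n k : ℕ) : ℝ := if k ≤ 2 * n then 1 else ((4 * n : ℝ) - k) / (2 * n)

theorem two_mul_vdpInterpKernel {n : ℕ} (hn : 1 ≤ n) (t : ℝ) :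
    2 * vdpInterpKernel n t = cosSum (vdpCoeff n) (4 * n) t := by
  have h0 : vdpCoeff n 0 = 1 := by simp [vdpCoeff]
  have e1 : Finset.Icc 1 (2 * n) = Finset.Ico 1 (2 * n + 1) := by ext; simp
  have e2 : Finset.Icc (2 * n + 1) (4 * n - 1) = Finset.Ico (2 * n + 1) (4 * n) := by
    ext; simp; omega
  have s1 : ∑ k ∈ Finset.Ico 1 (2 * n + 1), Real.cos (k * t) =
      ∑ k ∈ Finset.Ico 1 (2 * n + 1), vdpCoeff n k * Real.cos (k * t) := by
    refine Finset.sum_congr rfl fun k hk => ?_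
    rw [Finset.mem_Ico] at hk
    rw [vdpCoeff, if_pos (by omega), one_mul]
  have s2 : ∑ k ∈ Finset.Ico (2 * n + 1) (4 * n),
      (((4 * n : ℝ) - k) / (2 * n)) * Real.cos (k * t) =
      ∑ k ∈ Finset.Ico (2 * n + 1) (4 * n), vdpCoeff n k * Real.cos (k * t) := by
    refine Finset.sum_congr rfl fun k hk => ?_
    rw [Finset.mem_Ico] at hk
    rw [vdpCoeff, if_neg (by omega)]
  rw [vdpInterpKernel, cosSum, e1, e2, h0, s1, s2, add_assoc,
    Finset.sum_Ico_consecutive _ (by omega) (by omega)]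
  ring

theorem vdpInterpKernel_eq_fejer {n : ℕ} (hn : 1 ≤ n) (t : ℝ) :
    4 * n * vdpInterpKernel n t =
      cosSum (fun k => ((4 * n : ℕ) : ℝ) - k) (4 * n) t -
        cosSum (fun k => ((2 * n : ℕ) : ℝ) - k) (2 * n) t := by
  have hn' : (n : ℝ) ≠ 0 := by positivity
  have h := two_mul_vdpInterpKernel hn t
  have : 4 * n * vdpInterpKernel n t = 2 * n * (2 * vdpInterpKernel n t) := by ring
  rw [this, h]
  simp only [cosSum]
  rw [← Finset.sum_Ico_consecutive _ (show 1 ≤ 2 * n by omega) (show 2 * n ≤ 4 * n by omega),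
    ← Finset.sum_Ico_consecutive _ (show 1 ≤ 2 * n by omega) (show 2 * n ≤ 4 * n by omega)]
  have s1 : ∑ k ∈ Finset.Ico 1 (2 * n), (((4 * n : ℕ) : ℝ) - k) * Real.cos (k * t) =
      2 * n * ∑ k ∈ Finset.Ico 1 (2 * n), vdpCoeff n k * Real.cos (k * t) +
      ∑ k ∈ Finset.Ico 1 (2 * n), (((2 * n : ℕ) : ℝ) - k) * Real.cos (k * t) := by
    rw [Finset.mul_sum, ← Finset.sum_add_distrib]
    refine Finset.sum_congr rfl fun k hk => ?_
    rw [Finset.mem_Ico] at hk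
    rw [vdpCoeff, if_pos (by omega)]
    push_cast; ring
  have s2 : ∑ k ∈ Finset.Ico (2 * n) (4 * n), (((4 * n : ℕ) : ℝ) - k) * Real.cos (k * t) =
      2 * n * ∑ k ∈ Finset.Ico (2 * n) (4 * n), vdpCoeff n k * Real.cos (k * t) := by
    rw [Finset.mul_sum]
    refine Finset.sum_congr rfl fun k hk => ?_
    rw [Finset.mem_Ico] at hk
    rw [vdpCoeff]
    split_ifs with h
    · have : k = 2 * n := by omega
      subst this; push_cast; ring
    · push_cast; field_simp
  rw [s1, s2, show vdpCoeff n 0 = 1 by simp [vdpCoeff]]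
  push_cast
  ring

theorem node_eq (n k : ℕ) : Real.pi * k / (3 * n) = 2 * Real.pi * k / (6 * n : ℕ) := by
  push_cast
  rw [show (6 * n : ℝ) = 2 * (3 * n) by ring, mul_assoc, mul_div_mul_left _ _ two_ne_zero]

theorem sum_abs_vdpInterpKernel_le {n : ℕ} (hn : 1 ≤ n) (t : ℝ) :
    ∑ k ∈ Finset.range (6 * n), |vdpInterpKernel n (t - Real.pi * k / (3 * n))| ≤ 9 * n := by
  have hn' : (0 : ℝ) < n := by positivity
  have h : ∀ u, |vdpInterpKernel n u| ≤
      (cosSum (fun k => ((4 * n : ℕ) : ℝ) - k) (4 * n) u +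
        cosSum (fun k => ((2 * n : ℕ) : ℝ) - k) (2 * n) u) / (4 * n) := by
    intro u
    have h1 := cosSum_fejer_nonneg (4 * n) u
    have h2 := cosSum_fejer_nonneg (2 * n) u
    have h3 := vdpInterpKernel_eq_fejer hn u
    have h4 : |vdpInterpKernel n u| * (4 * n) = |4 * n * vdpInterpKernel n u| := by
      rw [abs_mul, abs_of_pos (show (0 : ℝ) < 4 * n by positivity), mul_comm]
    rw [le_div_iff₀ (by positivity), h4, h3, abs_le]
    constructor <;> linarith
  refine (Finset.sum_le_sum fun k _ => h _).trans ?_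
  rw [← Finset.sum_div, Finset.sum_add_distrib]
  simp only [node_eq]
  rw [sum_cosSum_equispaced _ (by omega) (by omega), sum_cosSum_equispaced _ (by omega) (by omega)]
  rw [div_le_iff₀ (by positivity)]
  push_cast
  nlinarith

theorem vdpInterpKernel_zero {n : ℕ} (hn : 1 ≤ n) : vdpInterpKernel n 0 = 3 * n := by
  have hn' : (n : ℝ) ≠ 0 := by positivity
  have h := vdpInterpKernel_eq_fejer hn 0
  rw [cosSum_fejer_eq, cosSum_fejer_eq] at h
  simp [Complex.normSq_apply] at h
  have : (4 * n : ℝ) * vdpInterpKernel n 0 = (4 * n) * (3 * n) := by rw [h]; ring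
  exact mul_left_cancel₀ (by positivity) this

theorem vdpInterpKernel_eq_zero {n : ℕ} (hn : 1 ≤ n) {t : ℝ}
    (h1 : Complex.exp (Complex.I * t) ≠ 1) (h6 : Complex.exp (Complex.I * t) ^ (6 * n) = 1) :
    vdpInterpKernel n t = 0 := by
  set z := Complex.exp (Complex.I * t) with hz
  have hpow : ∀ j : ℕ, Complex.exp (Complex.I * j * t) = z ^ j := by
    intro j; rw [hz, ← Complex.exp_nat_mul]; congr 1; ring
  have hw : (z ^ (2 * n)) ^ 3 = 1 := by rw [← pow_mul, ← h6]; congr 1; ring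
  have hnorm : ‖z‖ = 1 := by rw [hz, mul_comm, Complex.norm_exp_ofReal_mul_I]
  have e4 : z ^ (4 * n) - 1 = -(z ^ (2 * n)) ^ 2 * (z ^ (2 * n) - 1) := by
    rw [show z ^ (4 * n) = (z ^ (2 * n)) ^ 2 by rw [← pow_mul]; congr 1; ring]
    linear_combination hw
  have h := vdpInterpKernel_eq_fejer hn t
  rw [cosSum_fejer_eq, cosSum_fejer_eq] at h
  simp only [hpow, geom_sum_eq h1, e4] at h
  simp only [Complex.normSq_eq_norm_sq, norm_div, norm_mul, norm_neg, norm_pow, hnorm,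
    one_pow, one_mul, sub_self] at h
  have hn' : (n : ℝ) ≠ 0 := by positivity
  simpa [hn'] using h

theorem vdpInterp_node {n : ℕ} (hn : 1 ≤ n) (f : ℝ → ℂ) {l : ℕ} (hl : l < 6 * n) :
    vdpInterp n f (Real.pi * l / (3 * n)) = f (Real.pi * l / (3 * n)) := by
  have hn' : (n : ℝ) ≠ 0 := by positivity
  have hnc : (n : ℂ) ≠ 0 := by exact_mod_cast hn'
  have hpi : (Real.pi : ℂ) ≠ 0 := by exact_mod_cast Real.pi_ne_zero
  rw [vdpInterp, Finset.sum_eq_single l]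
  · rw [sub_self, vdpInterpKernel_zero hn, Complex.real_smul]
    push_cast
    field_simp
  · intro k hk hkl
    rw [Finset.mem_range] at hk
    rw [vdpInterpKernel_eq_zero hn, Complex.ofReal_zero, mul_zero]
    · intro h
      rw [Complex.exp_eq_one_iff] at h
      obtain ⟨m, hm⟩ := h
      push_cast at hm
      field_simp at hm
      have hm' : (l : ℤ) - k = 6 * n * m := by
        have : (l : ℂ) - k = 6 * n * m := by linear_combination hm
        exact_mod_cast this
      have : ((6 * n : ℕ) : ℤ) ∣ (l : ℤ) - k := ⟨m, by rw [hm']; push_cast; ring⟩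
      have := Int.eq_zero_of_abs_lt_dvd this (by rw [abs_lt]; omega)
      omega
    · rw [← Complex.exp_nat_mul, Complex.exp_eq_one_iff]
      refine ⟨(l : ℤ) - k, ?_⟩
      push_cast
      field_simp
      ring
  · intro h; exact absurd (Finset.mem_range.2 hl) h

theorem vdpInterp_vdpInterp_two_mul {n : ℕ} (hn : 1 ≤ n) (f : ℝ → ℂ) :
    vdpInterp n (vdpInterp (2 * n) f) = vdpInterp n f := by
  funext t
  rw [vdpInterp, vdpInterp]
  congr 1
  refine Finset.sum_congr rfl fun k hk => ?_
  rw [Finset.mem_range] at hk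
  have h := vdpInterp_node (n := 2 * n) (by omega) f (l := 2 * k) (by omega)
  have e : Real.pi * (2 * k : ℕ) / (3 * (2 * n : ℕ)) = Real.pi * k / (3 * n) := by
    push_cast
    rw [show Real.pi * (2 * k) = 2 * (Real.pi * k) by ring,
      show (3 * (2 * n) : ℝ) = 2 * (3 * n) by ring, mul_div_mul_left _ _ two_ne_zero]
  rw [e] at h
  rw [h]

theorem supNormE_vdpInterp_le {n : ℕ} (hn : 1 ≤ n) (f : ℝ → ℂ) :
    supNormE (vdpInterp n f) ≤ 3 * supNormE f := by
  have hn' : (0 : ℝ) < n := by positivity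
  refine supNormE_le fun t => ?_
  rw [vdpInterp, Complex.real_smul, enorm_mul]
  calc _ ≤ ‖((1 / (3 * n) : ℝ) : ℂ)‖ₑ * ∑ k ∈ Finset.range (6 * n),
        supNormE f * ‖((vdpInterpKernel n (t - Real.pi * k / (3 * n)) : ℝ) : ℂ)‖ₑ := by
        gcongr
        refine (enorm_sum_le _ _).trans (Finset.sum_le_sum fun k _ => ?_)
        rw [enorm_mul]
        gcongr
        exact enorm_le_supNormE _ _
    _ = ENNReal.ofReal ((1 / (3 * n)) * ∑ k ∈ Finset.range (6 * n),
          |vdpInterpKernel n (t - Real.pi * k / (3 * n))|) * supNormE f := by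
        rw [ENNReal.ofReal_mul (by positivity), ENNReal.ofReal_sum_of_nonneg (by simp),
          ← Finset.mul_sum]
        simp only [← ofReal_norm, Complex.norm_real, Real.norm_eq_abs,
          abs_of_pos (show (0 : ℝ) < 1 / (3 * n) by positivity)]
        ring
    _ ≤ _ := by
        gcongr
        refine ENNReal.ofReal_le_of_le_toReal ?_
        rw [one_div_mul_eq_div, div_le_iff₀ (by positivity)]
        refine (sum_abs_vdpInterpKernel_le hn t).trans (le_of_eq ?_)
        simp; ring

theorem vdpInterp_sub (n : ℕ) (f g : ℝ → ℂ) :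
    vdpInterp n (f - g) = vdpInterp n f - vdpInterp n g := by
  funext t
  simp only [vdpInterp, Pi.sub_apply, sub_mul, Finset.sum_sub_distrib, smul_sub]

/-- The trigonometric sum representing `V_n f`. -/
theorem vdpInterp_eq_trigSum {n : ℕ} (hn : 1 ≤ n) (f : ℝ → ℂ) :
    vdpInterp n f = trigSum (Finset.Ioo (-(4 * n : ℕ) : ℤ) (4 * n : ℕ)) fun j =>
      (vdpCoeff n j.natAbs : ℂ) * ((1 / (6 * n : ℕ)) * ∑ k ∈ Finset.range (6 * n),
        f (Real.pi * k / (3 * n)) * Complex.exp (-(Complex.I * j * (Real.pi * k / (3 * n))))) := by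
  funext t
  have hK : ∀ u, (vdpInterpKernel n u : ℂ) = (1 / 2) *
      ∑ j ∈ Finset.Ioo (-(4 * n : ℕ) : ℤ) (4 * n : ℕ),
        (vdpCoeff n j.natAbs : ℂ) * Complex.exp (Complex.I * j * u) := by
    intro u
    rw [← cosSum_eq_sum_exp _ (by omega), ← two_mul_vdpInterpKernel hn]
    push_cast; ring
  simp only [vdpInterp, trigSum, hK, Finset.mul_sum, Finset.sum_mul, Complex.real_smul]
  rw [Finset.sum_comm]
  refine Finset.sum_congr rfl fun j _ => Finset.sum_congr rfl fun k _ => ?_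
  have hn' : (n : ℂ) ≠ 0 := by exact_mod_cast (show n ≠ 0 by omega)
  push_cast
  rw [show (Complex.I * j * (t - Real.pi * k / (3 * n)) : ℂ) =
    -(Complex.I * j * (Real.pi * k / (3 * n))) + Complex.I * j * t by ring, Complex.exp_add]
  field_simp
  ring

theorem vdpInterp_exp {n : ℕ} (hn : 1 ≤ n) {m : ℤ} (hm : |m| ≤ 2 * n) :
    vdpInterp n (fun x => Complex.exp (Complex.I * m * x)) =
      fun x : ℝ => Complex.exp (Complex.I * m * x) := by
  rw [vdpInterp_eq_trigSum hn]
  funext t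
  rw [abs_le] at hm
  have e : ∀ j : ℤ, ∑ k ∈ Finset.range (6 * n),
      Complex.exp (Complex.I * m * (Real.pi * k / (3 * n) : ℝ)) *
        Complex.exp (-(Complex.I * j * (Real.pi * k / (3 * n)))) =
      if ((6 * n : ℕ) : ℤ) ∣ m - j then ((6 * n : ℕ) : ℂ) else 0 := by
    intro j
    rw [← sum_exp_equispaced (by omega)]
    refine Finset.sum_congr rfl fun k _ => ?_
    rw [← Complex.exp_add]
    congr 1
    have hn' : (n : ℂ) ≠ 0 := by exact_mod_cast (show n ≠ 0 by omega)
    push_cast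
    field_simp
    ring
  rw [trigSum]
  simp only [e]
  rw [Finset.sum_eq_single m]
  · have hn' : (n : ℂ) ≠ 0 := by exact_mod_cast (show n ≠ 0 by omega)
    rw [vdpCoeff, if_pos (by omega)]
    simp only [sub_self, dvd_zero, if_true]
    push_cast
    field_simp
  · intro j hj hjm
    rw [Finset.mem_Ioo] at hj
    rw [if_neg]
    · simp
    · intro hd
      have := Int.eq_zero_of_abs_lt_dvd hd (by rw [abs_lt]; push_cast at hj ⊢; omega)
      omega
  · intro h; exact absurd (Finset.mem_Ioo.2 (by push_cast; omega)) h

theorem vdpInterp_trigSum {n : ℕ} (hn : 1 ≤ n) {s : Finset ℤ} (hs : ∀ j ∈ s, |j| ≤ 2 * n)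
    (c : ℤ → ℂ) : vdpInterp n (trigSum s c) = trigSum s c := by
  funext t
  have : vdpInterp n (trigSum s c) t =
      ∑ j ∈ s, c j * vdpInterp n (fun x => Complex.exp (Complex.I * j * x)) t := by
    simp only [vdpInterp, trigSum, Finset.sum_mul, Finset.smul_sum, Finset.mul_sum]
    rw [Finset.sum_comm]
    refine Finset.sum_congr rfl fun j _ => Finset.sum_congr rfl fun k _ => ?_
    simp only [Complex.real_smul]
    ring
  rw [this, trigSum]
  refine Finset.sum_congr rfl fun j hj => ?_
  rw [vdpInterp_exp hn (hs j hj)]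

theorem vdpInterpKernel_periodic (n : ℕ) :
    Function.Periodic (vdpInterpKernel n) (2 * Real.pi) := by
  intro t
  have : ∀ k : ℕ, Real.cos (k * (t + 2 * Real.pi)) = Real.cos (k * t) := by
    intro k
    rw [mul_add, Real.cos_add_nat_mul_two_pi]
  simp only [vdpInterpKernel, this]

theorem vdpInterp_comp_add {n : ℕ} (hn : 1 ≤ n) {f : ℝ → ℂ} (hf : Periodic2PiOne f) (t : ℝ) :
    vdpInterp n (fun x => f (x + Real.pi / (3 * n))) t =
      vdpInterp n f (t + Real.pi / (3 * n)) := by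
  have hn' : (n : ℝ) ≠ 0 := by positivity
  simp only [vdpInterp]
  congr 1
  set g : ℕ → ℂ := fun k => f (Real.pi * k / (3 * n)) *
    ((vdpInterpKernel n (t + Real.pi / (3 * n) - Real.pi * k / (3 * n)) : ℝ) : ℂ) with hg
  have h1 : ∑ k ∈ Finset.range (6 * n), f (Real.pi * k / (3 * n) + Real.pi / (3 * n)) *
      ((vdpInterpKernel n (t - Real.pi * k / (3 * n)) : ℝ) : ℂ) =
      ∑ k ∈ Finset.range (6 * n), g (k + 1) := by
    refine Finset.sum_congr rfl fun k _ => ?_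
    simp only [hg]
    push_cast
    have e1 : Real.pi * k / (3 * n) + Real.pi / (3 * n) = Real.pi * (k + 1) / (3 * n) := by ring
    have e2 : t - Real.pi * k / (3 * n) =
        t + Real.pi / (3 * n) - Real.pi * (k + 1) / (3 * n) := by ring
    rw [e1, e2]
  have h2 : g (6 * n) = g 0 := by
    have e : Real.pi * (6 * n : ℕ) / (3 * n) = 2 * Real.pi := by push_cast; field_simp; ring
    simp only [hg, e, (vdpInterpKernel_periodic n).sub_eq]
    congr 1
    · simpa using hf 0
    · simp
  have h3 := Finset.sum_range_succ g (6 * n)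
  rw [Finset.sum_range_succ', h2] at h3
  rw [h1]
  exact add_right_cancel h3

theorem exists_schwartz_div_exp_sub_one (r : ℕ) :
    ∃ φ : SchwartzMap ℝ ℂ, ∀ u : ℝ, |u| ≤ 4 * Real.pi / 3 →
      φ u * (Complex.exp (Complex.I * u) - 1) ^ r = (Complex.I * u) ^ r := by
  have hpi := Real.pi_pos
  set D : ℂ → ℂ := dslope (fun z => Complex.exp (Complex.I * z)) 0 with hD
  have hmul : ∀ z : ℂ, z * D z = Complex.exp (Complex.I * z) - 1 := by
    intro z
    simpa using sub_smul_dslope (fun z => Complex.exp (Complex.I * z)) 0 z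
  have hdiff : Differentiable ℂ D := by
    rw [← differentiableOn_univ, hD, Complex.differentiableOn_dslope Filter.univ_mem]
    fun_prop
  have hsmooth : ContDiff ℝ (⊤ : ℕ∞) fun u : ℝ => D u :=
    (hdiff.contDiff.restrict_scalars ℝ).comp Complex.ofRealCLM.contDiff
  have hne : ∀ u : ℝ, |u| < 2 * Real.pi → D u ≠ 0 := by
    intro u hu h0
    by_cases h : u = 0
    · have hd : HasDerivAt (fun z => Complex.exp (Complex.I * z)) Complex.I 0 := by
        have h1 : HasDerivAt (fun z : ℂ => Complex.I * z) (Complex.I * 1) 0 :=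
          (hasDerivAt_id (0 : ℂ)).const_mul Complex.I
        exact h1.cexp.congr_deriv (by simp)
      rw [h, Complex.ofReal_zero, hD, dslope_same, hd.deriv] at h0
      exact Complex.I_ne_zero h0
    · have h1 := hmul u
      rw [h0, mul_zero, eq_comm, sub_eq_zero, Complex.exp_eq_one_iff] at h1
      obtain ⟨m, hm⟩ := h1
      have hm' : u = m * (2 * Real.pi) := by
        have : (u : ℂ) = m * (2 * Real.pi) := by
          apply mul_left_cancel₀ Complex.I_ne_zero
          rw [hm]; ring
        exact_mod_cast this
      have hm0 : m ≠ 0 := by rintro rfl; simp at hm'; exact h hm'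
      have : (1 : ℝ) ≤ |(m : ℝ)| := by exact_mod_cast Int.one_le_abs hm0
      rw [hm', abs_mul, abs_of_pos (show 0 < 2 * Real.pi by positivity)] at hu
      nlinarith
  let b : ContDiffBump (0 : ℝ) := ⟨4 * Real.pi / 3, 5 * Real.pi / 3, by positivity, by linarith⟩
  have hcs : HasCompactSupport fun u : ℝ => (b u : ℂ) * (Complex.I / D u) ^ r :=
    (b.hasCompactSupport.comp_left (g := fun x : ℝ => (x : ℂ)) Complex.ofReal_zero).mul_right
  have hcd : ContDiff ℝ (⊤ : ℕ∞) fun u : ℝ => (b u : ℂ) * (Complex.I / D u) ^ r := by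
    have hb : ContDiff ℝ (⊤ : ℕ∞) fun u : ℝ => (b u : ℂ) := Complex.ofRealCLM.contDiff.comp b.contDiff
    rw [contDiff_iff_contDiffAt]
    intro u
    by_cases hu' : u ∈ tsupport b
    swap
    · refine (contDiffAt_const (c := (0 : ℂ))).congr_of_eventuallyEq ?_
      filter_upwards [notMem_tsupport_iff_eventuallyEq.1 hu'] with v hv
      simp [hv]
    rw [b.tsupport_eq, Metric.mem_closedBall, Real.dist_0_eq_abs] at hu'
    have hu2 : |u| < 2 * Real.pi := lt_of_le_of_lt hu' (show 5 * Real.pi / 3 < _ by linarith)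
    have hq : ContDiffAt ℝ (⊤ : ℕ∞) (fun u : ℝ => Complex.I / D u) u := by
      simp only [div_eq_mul_inv]
      exact contDiffAt_const.mul (hsmooth.contDiffAt.inv (hne u hu2))
    exact hb.contDiffAt.mul (hq.pow r)
  refine ⟨hcs.toSchwartzMap hcd, fun u hu => ?_⟩
  have hb1 : b u = 1 := b.one_of_mem_closedBall (by
    rw [Metric.mem_closedBall, Real.dist_0_eq_abs]; exact hu)
  have hDu := hne u (by linarith)
  change (b u : ℂ) * _ * _ = _
  rw [hb1, ← hmul]
  rw [Complex.ofReal_one, one_mul, ← mul_pow]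
  congr 1
  field_simp

theorem exists_schwartz_one_sub_div_pow (r : ℕ) :
    ∃ (φ : SchwartzMap ℝ ℂ) (χ : ℝ → ℂ), (∀ u, 1 < |u| → χ u = 0) ∧
      ∀ u : ℝ, |u| ≤ 4 → φ u * (Complex.I * u) ^ r = 1 - χ u := by
  let b : ContDiffBump (0 : ℝ) := ⟨4, 5, by norm_num, by norm_num⟩
  let χ : ContDiffBump (0 : ℝ) := ⟨1 / 2, 1, by norm_num, by norm_num⟩
  have hb : ContDiff ℝ (⊤ : ℕ∞) fun u : ℝ => (b u : ℂ) := Complex.ofRealCLM.contDiff.comp b.contDiff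
  have hχ : ContDiff ℝ (⊤ : ℕ∞) fun u : ℝ => (χ u : ℂ) := Complex.ofRealCLM.contDiff.comp χ.contDiff
  have hid : ContDiff ℝ (⊤ : ℕ∞) fun u : ℝ => (u : ℂ) := Complex.ofRealCLM.contDiff
  have hcs : HasCompactSupport fun u : ℝ => (b u : ℂ) * ((1 - χ u) / (Complex.I * u) ^ r) :=
    (b.hasCompactSupport.comp_left (g := fun x : ℝ => (x : ℂ)) Complex.ofReal_zero).mul_right
  have hcd : ContDiff ℝ (⊤ : ℕ∞) fun u : ℝ => (b u : ℂ) * ((1 - χ u) / (Complex.I * u) ^ r) := by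
    rw [contDiff_iff_contDiffAt]
    intro u
    by_cases hu : u = 0
    · subst hu
      refine (contDiffAt_const (c := (0 : ℂ))).congr_of_eventuallyEq ?_
      filter_upwards [χ.eventuallyEq_one] with v hv
      simp [hv]
    · have hpow : ContDiffAt ℝ (⊤ : ℕ∞) (fun u : ℝ => (Complex.I * u) ^ r) u :=
        (contDiffAt_const.mul hid.contDiffAt).pow r
      have hne : (Complex.I * (u : ℂ)) ^ r ≠ 0 := by simp [hu]
      have hq : ContDiffAt ℝ (⊤ : ℕ∞) (fun u : ℝ => (1 - (χ u : ℂ)) / (Complex.I * u) ^ r) u := by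
        simp only [div_eq_mul_inv]
        exact (contDiffAt_const.sub hχ.contDiffAt).mul (hpow.inv hne)
      exact hb.contDiffAt.mul hq
  refine ⟨hcs.toSchwartzMap hcd, fun u => χ u, fun u hu => ?_, fun u hu => ?_⟩
  · beta_reduce
    rw [χ.zero_of_le_dist (by rw [Real.dist_0_eq_abs]; exact hu.le), Complex.ofReal_zero]
  · have hb1 : b u = 1 := b.one_of_mem_closedBall (by
      rw [Metric.mem_closedBall, Real.dist_0_eq_abs]; exact hu)
    change (b u : ℂ) * _ * _ = _
    rw [hb1, Complex.ofReal_one, one_mul]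
    by_cases hu : u = 0
    · subst hu
      have : χ 0 = 1 := χ.eventuallyEq_one.eq_of_nhds
      simp [this]
    · rw [div_mul_cancel₀]
      simp [hu]

theorem trigSum_const_mul (s : Finset ℤ) (b : ℂ) (c : ℤ → ℂ) (x : ℝ) :
    trigSum s (fun j => b * c j) x = b * trigSum s c x := by
  simp only [trigSum, Finset.mul_sum, mul_assoc]

theorem supNormE_trigSum_const_mul_le (s : Finset ℤ) (b : ℂ) (c : ℤ → ℂ) :
    supNormE (trigSum s fun j => b * c j) ≤ ‖b‖ₑ * supNormE (trigSum s c) := by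
  refine supNormE_le fun x => ?_
  rw [trigSum_const_mul, enorm_mul]
  gcongr
  exact enorm_le_supNormE _ _

/-- A Nikolskii–Stechkin inequality for `V_n f`, with the step equal to the node spacing. -/
theorem exists_supNormE_deriv_vdpInterp_le (r : ℕ) :
    ∃ C : ℝ≥0∞, C ≠ ∞ ∧ ∀ n : ℕ, 1 ≤ n → ∀ f : ℝ → ℂ,
      supNormE (deriv^[r] (vdpInterp n f)) ≤
        C * (n : ℝ≥0∞) ^ r * supNormE ((cDiffOne (Real.pi / (3 * n)))^[r] (vdpInterp n f)) := by
  obtain ⟨φ, hφ⟩ := exists_schwartz_div_exp_sub_one r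
  obtain ⟨C, hC, hmult⟩ := φ.exists_supNormE_multiplier_le
  refine ⟨C, hC, fun n hn f => ?_⟩
  have hn' : (0 : ℝ) < n := by positivity
  set h : ℝ := Real.pi / (3 * n) with hh
  have hpos : 0 < h := by positivity
  rw [vdpInterp_eq_trigSum hn]
  set c : ℤ → ℂ := fun j =>
      (vdpCoeff n j.natAbs : ℂ) * ((1 / (6 * n : ℕ)) * ∑ k ∈ Finset.range (6 * n),
        f (Real.pi * k / (3 * n)) * Complex.exp (-(Complex.I * j * (Real.pi * k / (3 * n)))))
  set s := Finset.Ioo (-(4 * n : ℕ) : ℤ) (4 * n : ℕ) with hs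
  rw [iterate_deriv_trigSum, iterate_cDiffOne_trigSum]
  have key : trigSum s (fun j => (Complex.I * j) ^ r * c j) = trigSum s (fun j => ((h : ℂ)⁻¹) ^ r *
      (φ (h * j) * ((Complex.exp (Complex.I * j * h) - 1) ^ r * c j))) := by
    funext x
    refine Finset.sum_congr rfl fun j hj => ?_
    congr 1
    have hj' : |(j : ℝ)| ≤ 4 * n := by
      rw [hs, Finset.mem_Ioo] at hj
      have : |j| ≤ 4 * n := by rw [abs_le]; push_cast at hj; omega
      exact_mod_cast this
    have hb : |h * j| ≤ 4 * Real.pi / 3 := by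
      rw [abs_mul, abs_of_pos hpos]
      calc h * |(j : ℝ)| ≤ h * (4 * n) := by gcongr
        _ = _ := by rw [hh]; field_simp
    have hφj := hφ (h * j) hb
    push_cast at hφj
    beta_reduce
    rw [show (Complex.I * j * h : ℂ) = Complex.I * (h * j) by ring, ← mul_assoc (φ _), hφj,
      ← mul_assoc (_ ^ r) (_ ^ r) (c j), ← mul_pow]
    congr 2
    have : (h : ℂ) ≠ 0 := by exact_mod_cast hpos.ne'
    field_simp
  rw [key]
  refine (supNormE_trigSum_const_mul_le _ _ _).trans ?_
  rw [mul_comm C, mul_assoc]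
  gcongr
  · rw [enorm_pow]
    gcongr
    rw [← Complex.ofReal_inv, ← ofReal_norm, Complex.norm_real, Real.norm_eq_abs,
      abs_of_pos (by positivity), ← ENNReal.ofReal_natCast]
    apply ENNReal.ofReal_le_ofReal
    rw [hh, inv_div, div_le_iff₀ Real.pi_pos]
    nlinarith [Real.pi_gt_three]
  · exact hmult h s _

/-- Consecutive dyadic interpolants differ by at most a Jackson-type bound. -/
theorem exists_supNormE_vdpInterp_sub_le (r : ℕ) :
    ∃ C : ℝ≥0∞, C ≠ ∞ ∧ ∀ n : ℕ, 1 ≤ n → ∀ f : ℝ → ℂ,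
      supNormE (vdpInterp (2 * n) f - vdpInterp n f) ≤
        C * (((2 * n : ℕ) : ℝ≥0∞)⁻¹ ^ r * supNormE (deriv^[r] (vdpInterp (2 * n) f))) := by
  obtain ⟨φ, χ, hχ, hφ⟩ := exists_schwartz_one_sub_div_pow r
  obtain ⟨C, hC, hmult⟩ := φ.exists_supNormE_multiplier_le
  refine ⟨4 * C, ENNReal.mul_ne_top (by simp) hC, fun n hn f => ?_⟩
  have hn' : (0 : ℝ) < n := by positivity
  obtain ⟨s, c, hs, hT⟩ : ∃ (s : Finset ℤ) (c : ℤ → ℂ), (∀ j ∈ s, |j| ≤ 8 * n) ∧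
      vdpInterp (2 * n) f = trigSum s c := by
    refine ⟨_, _, fun j hj => ?_, vdpInterp_eq_trigSum (by omega) f⟩
    rw [Finset.mem_Ioo] at hj
    rw [abs_le]; push_cast at hj; omega
  set a : ℝ := ((2 * n : ℕ) : ℝ)⁻¹ with ha
  have hapos : 0 < a := by positivity
  set Q := trigSum (s.filter fun j => |j| ≤ 2 * n) (fun j => χ (a * j) * c j) with hQ
  have hVQ : vdpInterp n Q = Q := vdpInterp_trigSum hn (fun j hj => (Finset.mem_filter.1 hj).2) _
  have hdiff : trigSum s c - Q = trigSum s fun j =>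
      (a : ℂ) ^ r * (φ (a * j) * ((Complex.I * j) ^ r * c j)) := by
    funext x
    simp only [Pi.sub_apply, hQ, trigSum, Finset.sum_filter]
    rw [← Finset.sum_sub_distrib]
    refine Finset.sum_congr rfl fun j hj => ?_
    have hj8 : |(j : ℝ)| ≤ 8 * n := by exact_mod_cast hs j hj
    have h4 : |a * j| ≤ 4 := by
      rw [abs_mul, abs_of_pos hapos, ha, inv_mul_le_iff₀ (by positivity)]
      push_cast; linarith
    have h1 := hφ _ h4
    have h2 : (a : ℂ) ^ r * (φ (a * j) * ((Complex.I * j) ^ r * c j)) =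
        (1 - χ (a * j)) * c j := by
      rw [← h1]; push_cast; ring
    rw [h2]
    split_ifs with hj2
    · ring
    · rw [hχ]
      · ring
      · have : (2 * n : ℝ) < |(j : ℝ)| := by exact_mod_cast not_le.1 hj2
        rw [abs_mul, abs_of_pos hapos, ha, lt_inv_mul_iff₀ (by positivity)]
        push_cast; linarith
  have hsplit : trigSum s c - vdpInterp n f =
      (trigSum s c - Q) - vdpInterp n (trigSum s c - Q) := by
    rw [vdpInterp_sub, hVQ, ← hT, vdpInterp_vdpInterp_two_mul hn]
    abel
  have hQle : supNormE (trigSum s c - Q) ≤ C * (((2 * n : ℕ) : ℝ≥0∞)⁻¹ ^ r *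
      supNormE (deriv^[r] (trigSum s c))) := by
    rw [hdiff, iterate_deriv_trigSum]
    refine (supNormE_trigSum_const_mul_le _ _ _).trans ?_
    rw [← mul_assoc C, mul_comm C, mul_assoc]
    gcongr
    · rw [enorm_pow]
      gcongr
      rw [← ofReal_norm, Complex.norm_real, Real.norm_eq_abs, abs_of_pos hapos, ha,
        ENNReal.ofReal_inv_of_pos (by positivity), ENNReal.ofReal_natCast]
    · exact hmult a s _
  rw [hT, hsplit]
  calc _ ≤ supNormE (trigSum s c - Q) + 3 * supNormE (trigSum s c - Q) :=
        (supNormE_sub_le _ _).trans (by gcongr; exact supNormE_vdpInterp_le hn _)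
    _ = 4 * supNormE (trigSum s c - Q) := by ring
    _ ≤ _ := by rw [mul_assoc]; gcongr

theorem iterate_cDiffOne_add (h : ℝ) (r : ℕ) (f g : ℝ → ℂ) :
    (cDiffOne h)^[r] (f + g) = (cDiffOne h)^[r] f + (cDiffOne h)^[r] g := by
  induction r generalizing f g with
  | zero => rfl
  | succ r ih =>
    rw [Function.iterate_succ_apply, Function.iterate_succ_apply, Function.iterate_succ_apply, ← ih]
    congr 1
    funext x
    simp only [cDiffOne, Pi.add_apply]
    ring

theorem iterate_cDiffOne_comp_add (h a : ℝ) (r : ℕ) (f : ℝ → ℂ) :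
    (cDiffOne h)^[r] (fun x => f (x + a)) = fun x => (cDiffOne h)^[r] f (x + a) := by
  induction r generalizing f with
  | zero => rfl
  | succ r ih =>
    rw [Function.iterate_succ_apply, Function.iterate_succ_apply, ← ih]
    congr 1
    funext x
    simp only [cDiffOne, add_right_comm x a h]

theorem supNormE_iterate_cDiffOne_le (h : ℝ) (r : ℕ) (f : ℝ → ℂ) :
    supNormE ((cDiffOne h)^[r] f) ≤ 2 ^ r * supNormE f := by
  induction r generalizing f with
  | zero => simp
  | succ r ih =>
    rw [Function.iterate_succ_apply, pow_succ, mul_assoc]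
    refine (ih _).trans ?_
    gcongr
    have : cDiffOne h f = (fun x => f (x + h)) - f := rfl
    rw [this, two_mul]
    refine (supNormE_sub_le _ _).trans ?_
    rw [supNormE_comp_add]

theorem supNormE_iterate_cDiffOne_two_mul_le (h : ℝ) (r : ℕ) (f : ℝ → ℂ) :
    supNormE ((cDiffOne (2 * h))^[r] f) ≤ 2 ^ r * supNormE ((cDiffOne h)^[r] f) := by
  induction r generalizing f with
  | zero => simp
  | succ r ih =>
    rw [Function.iterate_succ_apply, pow_succ, mul_assoc]
    refine (ih _).trans ?_
    gcongr
    have : cDiffOne (2 * h) f = cDiffOne h ((fun x => f (x + h)) + f) := by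
      funext x
      simp only [cDiffOne, Pi.add_apply]
      rw [show x + 2 * h = x + h + h by ring]
      ring
    rw [this, ← Function.iterate_succ_apply, iterate_cDiffOne_add, iterate_cDiffOne_comp_add,
      two_mul]
    refine (supNormE_add_le _ _).trans ?_
    rw [supNormE_comp_add]

theorem continuous_iterate_cDiffOne (h : ℝ) (r : ℕ) {f : ℝ → ℂ} (hf : Continuous f) :
    Continuous ((cDiffOne h)^[r] f) := by
  induction r generalizing f with
  | zero => exact hf
  | succ r ih =>
    rw [Function.iterate_succ_apply]
    exact ih (by unfold cDiffOne; fun_prop)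

theorem periodic_iterate_cDiffOne (h : ℝ) (r : ℕ) {f : ℝ → ℂ} (hf : Periodic2PiOne f) :
    Periodic2PiOne ((cDiffOne h)^[r] f) := by
  intro x
  have hf' : (fun x => f (x + 2 * Real.pi)) = f := funext hf
  have := congrFun (iterate_cDiffOne_comp_add h (2 * Real.pi) r f) x
  rw [hf'] at this
  exact this.symm

theorem iterate_cDiffOne_vdpInterp {n : ℕ} (hn : 1 ≤ n) (r : ℕ) {f : ℝ → ℂ}
    (hf : Periodic2PiOne f) :
    (cDiffOne (Real.pi / (3 * n)))^[r] (vdpInterp n f) =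
      vdpInterp n ((cDiffOne (Real.pi / (3 * n)))^[r] f) := by
  induction r generalizing f with
  | zero => rfl
  | succ r ih =>
    rw [Function.iterate_succ_apply, Function.iterate_succ_apply,
      ← ih (f := cDiffOne _ f) (periodic_iterate_cDiffOne _ 1 hf)]
    congr 1
    have : cDiffOne (Real.pi / (3 * n)) f = (fun x => f (x + Real.pi / (3 * n))) - f := rfl
    rw [this, vdpInterp_sub]
    funext t
    rw [Pi.sub_apply, vdpInterp_comp_add hn hf, cDiffOne]

theorem supNormE_trigSum_ne_top (s : Finset ℤ) (c : ℤ → ℂ) : supNormE (trigSum s c) ≠ ∞ := by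
  refine ne_top_of_le_ne_top (b := ∑ j ∈ s, ‖c j‖ₑ) (by simp) (supNormE_le fun x => ?_)
  refine (enorm_sum_le _ _).trans (Finset.sum_le_sum fun j _ => ?_)
  rw [enorm_mul, show (Complex.I * j * x : ℂ) = ((j * x : ℝ) : ℂ) * Complex.I by push_cast; ring,
    ← ofReal_norm (Complex.exp _), Complex.norm_exp_ofReal_mul_I, ENNReal.ofReal_one, mul_one]

theorem supNormE_cDiffOne_trigSum_le (h : ℝ) (s : Finset ℤ) (c : ℤ → ℂ) :
    supNormE (cDiffOne h (trigSum s c)) ≤ ‖h‖ₑ * supNormE (deriv (trigSum s c)) := by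
  refine supNormE_le fun x => ?_
  have hfin : supNormE (deriv (trigSum s c)) ≠ ∞ := by
    rw [deriv_trigSum]; exact supNormE_trigSum_ne_top _ _
  have hbd : ∀ y ∈ (Set.univ : Set ℝ),
      ‖deriv (trigSum s c) y‖ ≤ (supNormE (deriv (trigSum s c))).toReal := by
    intro y _
    rw [← toReal_enorm]
    exact ENNReal.toReal_mono hfin (enorm_le_supNormE _ _)
  have := Convex.norm_image_sub_le_of_norm_deriv_le
    (fun y _ => (differentiable_trigSum s c) y) hbd convex_univ (Set.mem_univ x)
    (Set.mem_univ (x + h))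
  rw [add_sub_cancel_left] at this
  rw [cDiffOne, ← ofReal_norm, ← ofReal_norm, mul_comm, ← ENNReal.ofReal_toReal hfin,
    ← ENNReal.ofReal_mul ENNReal.toReal_nonneg]
  exact ENNReal.ofReal_le_ofReal this

theorem supNormE_iterate_cDiffOne_trigSum_le (h : ℝ) (r : ℕ) (s : Finset ℤ) (c : ℤ → ℂ) :
    supNormE ((cDiffOne h)^[r] (trigSum s c)) ≤
      ‖h‖ₑ ^ r * supNormE (deriv^[r] (trigSum s c)) := by
  induction r generalizing c with
  | zero => simp
  | succ r ih =>
    have e1 := iterate_cDiffOne_trigSum s c h 1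
    rw [Function.iterate_one] at e1
    have e2 : deriv^[r] (cDiffOne h (trigSum s c)) = cDiffOne h (deriv^[r] (trigSum s c)) := by
      have e3 := iterate_cDiffOne_trigSum s (fun j => (Complex.I * j) ^ r * c j) h 1
      rw [Function.iterate_one] at e3
      rw [e1, iterate_deriv_trigSum, iterate_deriv_trigSum, e3]
      congr 1; funext j; ring
    rw [Function.iterate_succ_apply, pow_succ, mul_assoc]
    have ih' := ih fun j => (Complex.exp (Complex.I * j * h) - 1) ^ 1 * c j
    rw [← e1, e2] at ih'
    refine ih'.trans ?_
    gcongr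
    rw [Function.iterate_succ_apply', iterate_deriv_trigSum]
    exact supNormE_cDiffOne_trigSum_le _ _ _

theorem exists_trigSum_approx {f : ℝ → ℂ} (hf : Continuous f) (hp : Periodic2PiOne f) {ε : ℝ}
    (hε : 0 < ε) : ∃ (s : Finset ℤ) (c : ℤ → ℂ), ∀ x, ‖f x - trigSum s c x‖ ≤ ε := by
  have : Fact (0 < 2 * Real.pi) := ⟨by positivity⟩
  have hper : Function.Periodic f (2 * Real.pi) := hp
  let F : C(AddCircle (2 * Real.pi), ℂ) := ⟨hper.lift, continuous_coinduced_dom.2 hf⟩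
  have hF : F ∈ (Submodule.span ℂ (Set.range (@fourier (2 * Real.pi)))).topologicalClosure := by
    rw [span_fourier_closure_eq_top]; trivial
  obtain ⟨g, hg, hd⟩ := Metric.mem_closure_iff.1 hF ε hε
  obtain ⟨c, rfl⟩ := Finsupp.mem_span_range_iff_exists_finsupp.1 hg
  refine ⟨c.support, c, fun x => ?_⟩
  have h1 := (ContinuousMap.dist_apply_le_dist (f := F) (x : AddCircle (2 * Real.pi))).trans hd.le
  rw [dist_eq_norm] at h1
  have e : (c.sum fun i a => a • fourier i) (x : AddCircle (2 * Real.pi)) =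
      trigSum c.support c x := by
    rw [Finsupp.sum, ContinuousMap.sum_apply, trigSum]
    refine Finset.sum_congr rfl fun j _ => ?_
    rw [ContinuousMap.smul_apply, fourier_coe_apply, smul_eq_mul]
    congr 2
    have : (Real.pi : ℂ) ≠ 0 := by exact_mod_cast Real.pi_ne_zero
    push_cast
    field_simp
  rw [e] at h1
  exact h1

theorem exists_supNormE_sub_vdpInterp_le {f : ℝ → ℂ} (hf : Continuous f) (hp : Periodic2PiOne f)
    {ε : NNReal} (hε : 0 < ε) :
    ∃ N : ℕ, ∀ n, N ≤ n → 1 ≤ n → supNormE (f - vdpInterp n f) ≤ ε := by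
  obtain ⟨s, c, hsc⟩ := exists_trigSum_approx hf hp (ε := ε / 4) (by positivity)
  refine ⟨∑ j ∈ s, j.natAbs, fun n hn hn1 => ?_⟩
  have hs : ∀ j ∈ s, |j| ≤ 2 * n := by
    intro j hj
    have := Finset.single_le_sum (f := fun j : ℤ => j.natAbs) (fun _ _ => Nat.zero_le _) hj
    rw [Int.abs_eq_natAbs]
    have h2 := this.trans hn
    omega
  have hT : supNormE (f - trigSum s c) ≤ ENNReal.ofReal (ε / 4) := by
    refine supNormE_le fun x => ?_
    rw [← ofReal_norm]
    exact ENNReal.ofReal_le_ofReal (hsc x)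
  have e : f - vdpInterp n f = (f - trigSum s c) - vdpInterp n (f - trigSum s c) := by
    rw [vdpInterp_sub, vdpInterp_trigSum hn1 hs]; abel
  rw [e]
  calc _ ≤ supNormE (f - trigSum s c) + 3 * supNormE (f - trigSum s c) :=
        (supNormE_sub_le _ _).trans (by gcongr; exact supNormE_vdpInterp_le hn1 _)
    _ = 4 * supNormE (f - trigSum s c) := by ring
    _ ≤ 4 * ENNReal.ofReal (ε / 4) := by gcongr
    _ = ENNReal.ofReal (4 * (ε / 4)) := by rw [ENNReal.ofReal_mul (by norm_num)]; simp
    _ = ε := by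
      rw [mul_div_cancel₀ _ (by norm_num : (4 : ℝ) ≠ 0), ENNReal.ofReal_coe_nnreal]

theorem modSmoothOne_top_eq {f : ℝ → ℂ} (hf : Continuous f) (hp : Periodic2PiOne f) (r : ℕ)
    (δ : ℝ) : modSmoothOne r ∞ f δ =
      ⨆ h : {h : ℝ // |h| ≤ δ}, supNormE ((cDiffOne h.1)^[r] f) := by
  refine iSup_congr fun h => ?_
  exact eLpNorm_top_circleMeasure (continuous_iterate_cDiffOne _ _ hf)
    (periodic_iterate_cDiffOne _ _ hp)

theorem eLpNorm_iterate_deriv_vdpInterp (r : ℕ) {n : ℕ} (hn : 1 ≤ n) (f : ℝ → ℂ) :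
    eLpNorm (deriv^[r] (vdpInterp n f)) ∞ circleMeasure =
      supNormE (deriv^[r] (vdpInterp n f)) := by
  rw [vdpInterp_eq_trigSum hn, iterate_deriv_trigSum]
  exact eLpNorm_top_circleMeasure (continuous_trigSum _ _) (trigSum_periodic _ _)

theorem two_rpow_neg_natCast_mul (m r : ℕ) :
    (2 : ℝ≥0∞) ^ (-((m * r : ℕ) : ℝ)) = (((2 ^ m : ℕ) : ℝ≥0∞)⁻¹) ^ r := by
  rw [ENNReal.rpow_neg, ENNReal.rpow_natCast, pow_mul, ENNReal.inv_pow]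
  push_cast
  rfl

theorem exists_weighted_supNormE_deriv_vdpInterp_le_modSmoothOne (r : ℕ) :
    ∃ C : ℝ≥0∞, C ≠ ∞ ∧ ∀ f : ℝ → ℂ, Continuous f → Periodic2PiOne f → ∀ n : ℕ, 1 ≤ n →
      ((n : ℝ≥0∞)⁻¹) ^ r * supNormE (deriv^[r] (vdpInterp n f)) ≤
        C * modSmoothOne r ∞ f (1 / n) := by
  obtain ⟨C, hC, h⟩ := exists_supNormE_deriv_vdpInterp_le r
  refine ⟨C * (3 * 2 ^ r), by finiteness, fun f hf hp n hn => ?_⟩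
  have hn' : (0 : ℝ) < n := by positivity
  set δ : ℝ := Real.pi / (3 * n) with hδ
  have hhalf : |δ / 2| ≤ 1 / n := by
    rw [abs_of_pos (by positivity), hδ, div_div, div_le_div_iff₀ (by positivity) hn']
    nlinarith [Real.pi_lt_four]
  have h1 : supNormE ((cDiffOne δ)^[r] f) ≤ 2 ^ r * modSmoothOne r ∞ f (1 / n) := by
    rw [modSmoothOne_top_eq hf hp]
    have := supNormE_iterate_cDiffOne_two_mul_le (δ / 2) r f
    rw [mul_div_cancel₀ δ two_ne_zero] at this
    refine this.trans ?_
    gcongr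
    exact le_iSup (fun h : {h : ℝ // |h| ≤ 1 / (n : ℝ)} => supNormE ((cDiffOne h.1)^[r] f))
      ⟨δ / 2, hhalf⟩
  have hcancel : ((n : ℝ≥0∞)⁻¹) ^ r * (n : ℝ≥0∞) ^ r = 1 := by
    rw [← mul_pow, ENNReal.inv_mul_cancel (by simp; omega) (by simp), one_pow]
  calc _ ≤ ((n : ℝ≥0∞)⁻¹) ^ r * (C * (n : ℝ≥0∞) ^ r * (3 * (2 ^ r *
        modSmoothOne r ∞ f (1 / n)))) := by
        gcongr
        refine (h n hn f).trans ?_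
        gcongr
        rw [iterate_cDiffOne_vdpInterp hn r hp]
        refine (supNormE_vdpInterp_le hn _).trans ?_
        gcongr
    _ = (((n : ℝ≥0∞)⁻¹) ^ r * (n : ℝ≥0∞) ^ r) * (C * (3 * 2 ^ r) *
        modSmoothOne r ∞ f (1 / n)) := by ring
    _ = _ := by rw [hcancel, one_mul]

/-- The error of `V_{2^n} f` is controlled by the weighted derivatives of the later interpolants. -/
theorem exists_supNormE_sub_vdpInterp_le_tsum (r : ℕ) :
    ∃ C : ℝ≥0∞, C ≠ ∞ ∧ ∀ f : ℝ → ℂ, Continuous f → Periodic2PiOne f → ∀ n : ℕ,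
      supNormE (f - vdpInterp (2 ^ n) f) ≤
        C * ∑' k : ℕ, (((2 ^ (n + k) : ℕ) : ℝ≥0∞)⁻¹) ^ r *
          supNormE (deriv^[r] (vdpInterp (2 ^ (n + k)) f)) := by
  obtain ⟨C, hC, h⟩ := exists_supNormE_vdpInterp_sub_le r
  refine ⟨C, hC, fun f hf hp n => ?_⟩
  set a : ℕ → ℝ≥0∞ := fun k => (((2 ^ (n + k) : ℕ) : ℝ≥0∞)⁻¹) ^ r *
          supNormE (deriv^[r] (vdpInterp (2 ^ (n + k)) f)) with ha
  have htel : ∀ m : ℕ, supNormE (vdpInterp (2 ^ (n + m)) f - vdpInterp (2 ^ n) f) ≤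
      C * ∑ k ∈ Finset.range (m + 1), a k := by
    intro m
    induction m with
    | zero => simp [supNormE]
    | succ m ih =>
      have hs := h (2 ^ (n + m)) Nat.one_le_two_pow f
      rw [show 2 * 2 ^ (n + m) = 2 ^ (n + (m + 1)) by ring] at hs
      rw [Finset.sum_range_succ, mul_add, add_comm (C * _)]
      rw [← sub_add_sub_cancel _ (vdpInterp (2 ^ (n + m)) f)]
      exact (supNormE_add_le _ _).trans (add_le_add hs ih)
  refine ENNReal.le_of_forall_pos_le_add fun ε hε _ => ?_
  obtain ⟨N, hN⟩ := exists_supNormE_sub_vdpInterp_le hf hp hε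
  have hNle : N ≤ 2 ^ (n + N) :=
    (Nat.lt_two_pow_self).le.trans (Nat.pow_le_pow_right two_pos (by omega))
  rw [← sub_add_sub_cancel _ (vdpInterp (2 ^ (n + N)) f), add_comm (C * _)]
  refine (supNormE_add_le _ _).trans (add_le_add (hN _ hNle Nat.one_le_two_pow) ?_)
  refine (htel N).trans ?_
  gcongr
  exact ENNReal.sum_le_tsum _

theorem exists_modSmoothOne_le_tsum (r : ℕ) :
    ∃ C : ℝ≥0∞, C ≠ ∞ ∧ ∀ f : ℝ → ℂ, Continuous f → Periodic2PiOne f → ∀ n : ℕ,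
      modSmoothOne r ∞ f (1 / 2 ^ n) ≤
        C * ∑' k : ℕ, (((2 ^ (n + 1 + k) : ℕ) : ℝ≥0∞)⁻¹) ^ r *
          supNormE (deriv^[r] (vdpInterp (2 ^ (n + 1 + k)) f)) := by
  obtain ⟨C, hC, h⟩ := exists_supNormE_sub_vdpInterp_le_tsum r
  refine ⟨2 ^ r * C + 2 ^ r, by finiteness, fun f hf hp n => ?_⟩
  have h0 := ENNReal.le_tsum (f := fun k : ℕ => (((2 ^ (n + 1 + k) : ℕ) : ℝ≥0∞)⁻¹) ^ r *
          supNormE (deriv^[r] (vdpInterp (2 ^ (n + 1 + k)) f))) 0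
  have h1 := h f hf hp (n + 1)
  set S := ∑' k : ℕ, (((2 ^ (n + 1 + k) : ℕ) : ℝ≥0∞)⁻¹) ^ r *
          supNormE (deriv^[r] (vdpInterp (2 ^ (n + 1 + k)) f))
  rw [modSmoothOne_top_eq hf hp]
  refine iSup_le fun ⟨δ, hδ⟩ => ?_
  set P := vdpInterp (2 ^ (n + 1)) f with hP
  have hδ' : ‖δ‖ₑ ≤ 2 * ((2 ^ (n + 1) : ℕ) : ℝ≥0∞)⁻¹ := by
    rw [← ofReal_norm, Real.norm_eq_abs]
    refine (ENNReal.ofReal_le_ofReal hδ).trans (le_of_eq ?_)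
    rw [show (1 / 2 ^ n : ℝ) = 2 * ((2 ^ (n + 1) : ℕ) : ℝ)⁻¹ by
      push_cast; rw [pow_succ]; field, ENNReal.ofReal_mul (by norm_num),
      ENNReal.ofReal_inv_of_pos (by positivity), ENNReal.ofReal_natCast]
    simp
  have hPle : supNormE ((cDiffOne δ)^[r] P) ≤ 2 ^ r * S := by
    have : supNormE ((cDiffOne δ)^[r] P) ≤ ‖δ‖ₑ ^ r * supNormE (deriv^[r] P) := by
      rw [hP, vdpInterp_eq_trigSum Nat.one_le_two_pow]
      exact supNormE_iterate_cDiffOne_trigSum_le _ _ _ _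
    calc _ ≤ (2 * ((2 ^ (n + 1) : ℕ) : ℝ≥0∞)⁻¹) ^ r * supNormE (deriv^[r] P) :=
          this.trans (by gcongr)
      _ = 2 ^ r * ((((2 ^ (n + 1) : ℕ) : ℝ≥0∞)⁻¹) ^ r * supNormE (deriv^[r] P)) := by
          rw [mul_pow, mul_assoc]
      _ ≤ _ := by gcongr
  calc supNormE ((cDiffOne δ)^[r] f)
      = supNormE ((cDiffOne δ)^[r] (f - P) + (cDiffOne δ)^[r] P) := by
        rw [← iterate_cDiffOne_add, sub_add_cancel]
    _ ≤ 2 ^ r * (C * S) + 2 ^ r * S := (supNormE_add_le _ _).trans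
        (add_le_add ((supNormE_iterate_cDiffOne_le _ _ _).trans (by gcongr)) hPle)
    _ = _ := by ring

/-- For `f ∈ C(𝕋)` and `r, n ∈ ℕ`,
`2^{-nr} ‖(V_{2^n}f)^{(r)}‖_∞ ≲ ω_r(f,2^{-n})_∞ ≲ ∑_{k=n+1}^∞ 2^{-kr} ‖(V_{2^k}f)^{(r)}‖_∞`. -/
theorem stmt13 (r : ℕ) (hr : 0 < r) :
    ∃ C : ℝ≥0∞, 0 < C ∧ C ≠ ∞ ∧
      ∀ f : ℝ → ℂ, Continuous f → Periodic2PiOne f →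
        ∀ n : ℕ, 1 ≤ n →
          (2 : ℝ≥0∞) ^ (-((n * r : ℕ) : ℝ)) *
              eLpNorm (deriv^[r] (vdpInterp (2 ^ n) f)) ∞ circleMeasure
            ≤ C * modSmoothOne r ∞ f (1 / 2 ^ n) ∧
          modSmoothOne r ∞ f (1 / 2 ^ n)
            ≤ C * ∑' k : ℕ,
                (2 : ℝ≥0∞) ^ (-(((n + 1 + k) * r : ℕ) : ℝ)) *
                  eLpNorm (deriv^[r] (vdpInterp (2 ^ (n + 1 + k)) f)) ∞ circleMeasure := by
  obtain ⟨C₁, hC₁, h₁⟩ := exists_weighted_supNormE_deriv_vdpInterp_le_modSmoothOne r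
  obtain ⟨C₂, hC₂, h₂⟩ := exists_modSmoothOne_le_tsum r
  refine ⟨C₁ + C₂ + 1, by positivity, by finiteness, fun f hf hp n _ => ?_⟩
  simp only [two_rpow_neg_natCast_mul, eLpNorm_iterate_deriv_vdpInterp r Nat.one_le_two_pow]
  constructor
  · have := h₁ f hf hp (2 ^ n) Nat.one_le_two_pow
    push_cast at this ⊢
    refine this.trans ?_
    gcongr
    exact le_self_add.trans le_self_add
  · refine (h₂ f hf hp n).trans ?_
    gcongr
    exact le_add_self.trans le_self_add
end
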